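/- arXiv:1103.5654 — 2 statements merged into one kernel-verified Lean document; each statement's English description precedes it below -/
import Mathlib

section
/- Let r ≥ 0 and 1 ≤ s ≤ 3 be integers and set d_3(n,r,s) = n^2 − (n−r)^2 + 1 if s = 1, n^2 − (n−r)(n−r−1) if s = 2, and n^2 − (n−r−1)^2 if s = 3. If H is a 3-partite 3-graph with each class of size n ≥ 3^7·(3r+s+1) and δ_1(H) > d_3(n,r,s), then H contains a matching of size 3r + s + 1. -/
/-- The degree of the vertex `x` in class `c` of a 3-partite 3-graph, encoded as a
finite set of functions `Fin 3 → Fin n`. -/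
def deg3 {n : ℕ} (H : Finset (Fin 3 → Fin n)) (c : Fin 3) (x : Fin n) : ℕ :=
  (H.filter (fun e => e c = x)).card

/-- The degree threshold `d₃(n,r,s)` for a matching of size `3r+s+1`. -/
def d3 (n r s : ℕ) : ℕ :=
  if s = 1 then n ^ 2 - (n - r) ^ 2 + 1
  else if s = 2 then n ^ 2 - (n - r) * (n - r - 1)
  else n ^ 2 - (n - r - 1) ^ 2

/-!
Put `m = 3r + s` and suppose that no matching has more than `m` edges. Two vertices of different
classes lie in at most `n` common edges, so a matching with at most `m` edges can be extended by an
edge through any uncovered vertex of degree more than `2mn`. Hence there are at most `m` such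
vertices; let `T` be their set. After deleting `T`, all matchings have at most `m - |T|` edges and
all degrees are at most `2mn`, which leaves at most `3(m - |T|) * 2mn` edges. The minimum degree
condition forces more edges than that, except when `s = 1` and `T` has exactly `r` vertices in each
class. In that case `m - |T| = 1`, so the remaining hypergraph is intersecting, but at least three
vertices of each class still have degree at least two in it, which is impossible.
-/

open Finset

/-- A `k`-partite `k`-graph with classes `α i`, where `k` is the number of indices `i : ι`: an
edge picks one vertex from each class. -/
abbrev PartiteHypergraph {ι : Type*} (α : ι → Type*) : Type _ :=
  Finset (∀ i, α i)

namespace PartiteHypergraph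

section Matching

variable {ι : Type*} {α : ι → Type*}

/-- A set of edges is a matching if distinct edges have no vertex in common. -/
def IsMatching (M : PartiteHypergraph α) : Prop :=
  (M : Set (∀ i, α i)).Pairwise fun e f => ∀ i, e i ≠ f i

lemma isMatching_empty : IsMatching (∅ : PartiteHypergraph α) := by
  simp [IsMatching]

lemma IsMatching.subset {M N : PartiteHypergraph α} (hM : IsMatching M) (hNM : N ⊆ M) :
    IsMatching N :=
  hM.mono (coe_subset.2 hNM)

lemma IsMatching.insert_edge [DecidableEq (∀ i, α i)] {M : PartiteHypergraph α} (hM : IsMatching M)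
    {e : ∀ i, α i} (he : ∀ f ∈ M, ∀ i, e i ≠ f i) : IsMatching (insert e M) := by
  unfold IsMatching
  rw [coe_insert]
  exact Set.Pairwise.insert hM fun f hf _ => ⟨he f hf, fun i => (he f hf i).symm⟩

lemma isMatching_pair [DecidableEq (∀ i, α i)] {e f : ∀ i, α i} (hef : ∀ i, e i ≠ f i) :
    IsMatching ({e, f} : PartiteHypergraph α) := by
  rw [← insert_empty_eq f]
  exact (isMatching_empty.insert_edge (by simp)).insert_edge (by simpa using hef)

lemma exists_isMatching_forall_inter [Nonempty ι] (H : PartiteHypergraph α) :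
    ∃ M ⊆ H, IsMatching M ∧ ∀ e ∈ H, ∃ f ∈ M, ∃ i, e i = f i := by
  classical
  obtain ⟨M, hM⟩ := exists_maximal (s := {M ∈ H.powerset | IsMatching M})
    ⟨∅, by simp [isMatching_empty]⟩
  obtain ⟨hMH, hMm⟩ : M ⊆ H ∧ IsMatching M := by simpa using hM.prop
  refine ⟨M, hMH, hMm, fun e he => ?_⟩
  by_contra! hdisj
  have hins : insert e M ∈ ({M ∈ H.powerset | IsMatching M} : Finset (PartiteHypergraph α)) := by
    simpa using ⟨insert_subset he hMH, hMm.insert_edge hdisj⟩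
  have heM : e ∈ M := hM.le_of_ge hins (subset_insert e M) (mem_insert_self e M)
  exact hdisj e heM (Classical.arbitrary ι) rfl

/-- A hypergraph is intersecting if any two of its edges have a vertex in common. -/
def IsIntersecting (H : PartiteHypergraph α) : Prop :=
  ∀ e ∈ H, ∀ f ∈ H, ∃ i, e i = f i

lemma isIntersecting_of_card_le_one [Nonempty ι] {H : PartiteHypergraph α}
    (hH : ∀ M ⊆ H, IsMatching M → #M ≤ 1) : IsIntersecting H := by
  classical
  intro e he f hf
  by_contra! hdisj
  have hef : e ≠ f := fun h => hdisj (Classical.arbitrary ι) (congrFun h _)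
  have hpair := hH {e, f} (by simp [insert_subset_iff, he, hf]) (isMatching_pair hdisj)
  rw [card_pair hef] at hpair
  omega

end Matching

section Degree

variable {ι : Type*} {α : ι → Type*} [∀ i, DecidableEq (α i)]

/-- The number of edges through the vertex `x` of the class `i`. -/
def degree (H : PartiteHypergraph α) (i : ι) (x : α i) : ℕ :=
  #{e ∈ H | e i = x}

/-- The number of edges through both the vertex `x` of the class `i` and the vertex `y` of the
class `j`. -/
def codegree (H : PartiteHypergraph α) (i : ι) (x : α i) (j : ι) (y : α j) : ℕ :=
  #{e ∈ H | e i = x ∧ e j = y}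

lemma degree_mono {G H : PartiteHypergraph α} (hGH : G ⊆ H) (i : ι) (x : α i) :
    degree G i x ≤ degree H i x :=
  card_le_card (filter_subset_filter _ hGH)

lemma exists_ne_of_one_lt_degree {H : PartiteHypergraph α} {i : ι} {x : α i}
    (hx : 1 < degree H i x) : ∃ e ∈ H, ∃ f ∈ H, e ≠ f ∧ e i = x ∧ f i = x := by
  obtain ⟨e, he, f, hf, hef⟩ := one_lt_card.1 hx
  rw [mem_filter] at he hf
  exact ⟨e, he.1, f, hf.1, hef, he.2, hf.2⟩

/-- The vertices of the class `i` whose degree exceeds `D`. -/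
def heavyVertices [∀ i, Fintype (α i)] (H : PartiteHypergraph α) (D : ℕ) (i : ι) : Finset (α i) :=
  {x | D < degree H i x}

lemma mem_heavyVertices [∀ i, Fintype (α i)] {H : PartiteHypergraph α} {D : ℕ} {i : ι} {x : α i} :
    x ∈ heavyVertices H D i ↔ D < degree H i x := by
  simp [heavyVertices]

lemma card_mul_le_card_of_le_degree {H : PartiteHypergraph α} {i : ι} {U : Finset (α i)} {q : ℤ}
    (hU : ∀ x ∈ U, q ≤ degree H i x) : #U * q ≤ #H := by
  calc (#U : ℤ) * q ≤ ∑ x ∈ U, (degree H i x : ℤ) := by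
        simpa only [nsmul_eq_mul] using card_nsmul_le_sum U _ q hU
    _ = #{e ∈ H | e i ∈ U} := mod_cast sum_card_fiberwise_eq_card_filter H U fun e => e i
    _ ≤ #H := mod_cast card_filter_le _ _

lemma card_le_mul_of_degree_le [Fintype ι] [Nonempty ι] {H : PartiteHypergraph α} {D t : ℕ}
    (hD : ∀ e ∈ H, ∀ i, degree H i (e i) ≤ D) (ht : ∀ M ⊆ H, IsMatching M → #M ≤ t) :
    #H ≤ t * Fintype.card ι * D := by
  classical
  obtain ⟨M, hMH, hM, hcover⟩ := exists_isMatching_forall_inter H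
  have hsub : H ⊆ (M ×ˢ univ).biUnion fun p => {e ∈ H | e p.2 = p.1 p.2} := by
    intro e he
    obtain ⟨f, hf, i, hi⟩ := hcover e he
    exact mem_biUnion.2 ⟨(f, i), by simpa using hf, mem_filter.2 ⟨he, hi⟩⟩
  calc #H ≤ #(M ×ˢ (univ : Finset ι)) * D :=
        (card_le_card hsub).trans <| card_biUnion_le_card_mul _ _ _ fun p hp =>
          hD p.1 (hMH (mem_product.1 hp).1) p.2
    _ = #M * Fintype.card ι * D := by rw [card_product, card_univ]
    _ ≤ t * Fintype.card ι * D := by gcongr; exact ht M hMH hM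

lemma exists_edge_avoiding {H : PartiteHypergraph α} {B : ℕ} {i : ι} {x : α i}
    {W : Finset (Σ j, α j)} (hB : ∀ w ∈ W, codegree H i x w.1 w.2 ≤ B)
    (hx : #W * B < degree H i x) : ∃ e ∈ H, e i = x ∧ ∀ w ∈ W, e w.1 ≠ w.2 := by
  classical
  by_contra! hcover
  have hsub : ({e ∈ H | e i = x} : PartiteHypergraph α) ⊆
      W.biUnion fun w => {e ∈ H | e i = x ∧ e w.1 = w.2} := by
    intro e he
    obtain ⟨heH, hex⟩ := mem_filter.1 he
    obtain ⟨w, hw, hew⟩ := hcover e heH hex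
    exact mem_biUnion.2 ⟨w, hw, mem_filter.2 ⟨heH, hex, hew⟩⟩
  exact hx.not_ge ((card_le_card hsub).trans (card_biUnion_le_card_mul _ _ _ hB))

end Degree

section Greedy

variable {ι : Type*} [Fintype ι] [Nontrivial ι] {α : ι → Type*} [∀ i, DecidableEq (α i)]
  {H : PartiteHypergraph α} {B m : ℕ}

lemma exists_edge_extending
    (hB : ∀ i x j y, i ≠ j → codegree H i x j y ≤ B) {M : PartiteHypergraph α}
    {S : Finset (Σ i, α i)} {i : ι} {x : α i} (hxM : ∀ f ∈ M, f i ≠ x) (hxS : ⟨i, x⟩ ∉ S)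
    (hx : (Fintype.card ι - 1) * (#M + #S) * B < degree H i x) :
    ∃ e ∈ H, e i = x ∧ (∀ f ∈ M, ∀ j, e j ≠ f j) ∧ ∀ j, ⟨j, e j⟩ ∉ S := by
  classical
  -- The vertices `e` has to avoid; those in class `i` are avoided because `e i = x`.
  let W : Finset (Σ j, α j) :=
    (M ×ˢ univ.erase i).image (fun p => ⟨p.2, p.1 p.2⟩) ∪ {w ∈ S | w.1 ≠ i}
  have hW : #W ≤ (Fintype.card ι - 1) * (#M + #S) := by
    have hk : 1 ≤ Fintype.card ι - 1 := Nat.le_sub_one_of_lt Fintype.one_lt_card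
    calc #W ≤ #(M ×ˢ univ.erase i) + #S :=
          (card_union_le _ _).trans (add_le_add card_image_le (card_filter_le _ _))
      _ = (Fintype.card ι - 1) * #M + #S := by
          rw [card_product, card_erase_of_mem (mem_univ i), card_univ, mul_comm]
      _ ≤ (Fintype.card ι - 1) * (#M + #S) := by nlinarith
  have hWi : ∀ w ∈ W, i ≠ w.1 := by
    intro w hw
    simp only [W, mem_union, mem_image, mem_product, mem_erase, mem_filter] at hw
    rcases hw with ⟨p, ⟨-, hp, -⟩, rfl⟩ | ⟨-, hw⟩
    exacts [hp.symm, hw.symm]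
  obtain ⟨e, heH, hex, heW⟩ := exists_edge_avoiding (fun w hw => hB i x w.1 w.2 (hWi w hw))
    ((Nat.mul_le_mul_right B hW).trans_lt hx)
  refine ⟨e, heH, hex, fun f hf j => ?_, fun j hj => ?_⟩
  · rcases eq_or_ne j i with rfl | hji
    · rw [hex]
      exact (hxM f hf).symm
    · exact heW ⟨j, f j⟩ (mem_union_left _ (mem_image.2 ⟨(f, j), by simp [hf, hji], rfl⟩))
  · rcases eq_or_ne j i with rfl | hji
    · exact hxS (hex ▸ hj)
    · exact heW ⟨j, e j⟩ (mem_union_right _ (mem_filter.2 ⟨hj, hji⟩)) rfl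

lemma IsMatching.exists_extension
    (hB : ∀ i x j y, i ≠ j → codegree H i x j y ≤ B) {S : Finset (Σ i, α i)}
    (hS : ∀ v ∈ S, (Fintype.card ι - 1) * m * B < degree H v.1 v.2) {M : PartiteHypergraph α}
    (hM : IsMatching M) (hMH : M ⊆ H) (hMS : ∀ e ∈ M, ∀ i, ⟨i, e i⟩ ∉ S)
    (hcard : #M + #S ≤ m + 1) :
    ∃ N ⊆ H, IsMatching N ∧ #N = #M + #S := by
  classical
  induction S using Finset.induction_on generalizing M with
  | empty => exact ⟨M, hMH, hM, by simp⟩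
  | insert v S hv ih =>
    rw [card_insert_of_notMem hv] at hcard ⊢
    have hMv : ∀ f ∈ M, f v.1 ≠ v.2 := fun f hf hfv =>
      hMS f hf v.1 (by rw [hfv]; exact mem_insert_self v S)
    obtain ⟨e, heH, hev, heM, heS⟩ := exists_edge_extending hB hMv hv <|
      (Nat.mul_le_mul_right B (Nat.mul_le_mul_left _ (by omega))).trans_lt
        (hS v (mem_insert_self v S))
    have heM' : e ∉ M := fun he => heM e he v.1 rfl
    have heMS : ∀ f ∈ insert e M, ∀ i, ⟨i, f i⟩ ∉ S := by
      intro f hf i hi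
      rcases mem_insert.1 hf with rfl | hf
      exacts [heS i hi, hMS f hf i (mem_insert_of_mem hi)]
    obtain ⟨N, hNH, hN, hNcard⟩ := ih (fun w hw => hS w (mem_insert_of_mem hw))
      (hM.insert_edge heM) (insert_subset heH hMH) heMS
      (by rw [card_insert_of_notMem heM']; omega)
    refine ⟨N, hNH, hN, ?_⟩
    rw [hNcard, card_insert_of_notMem heM']
    omega

end Greedy

section Deletion

variable {ι : Type*} [Fintype ι] {α : ι → Type*} [∀ i, DecidableEq (α i)]

/-- The hypergraph that remains after deleting the vertices in `T i` from each class `i`. The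
classes themselves are not shrunk: the deleted vertices become isolated. -/
def deleteVertices (H : PartiteHypergraph α) (T : ∀ i, Finset (α i)) : PartiteHypergraph α :=
  {e ∈ H | ∀ i, e i ∉ T i}

lemma deleteVertices_subset (H : PartiteHypergraph α) (T : ∀ i, Finset (α i)) :
    deleteVertices H T ⊆ H :=
  filter_subset _ _

lemma notMem_of_mem_deleteVertices {H : PartiteHypergraph α} {T : ∀ i, Finset (α i)}
    {e : ∀ i, α i} (he : e ∈ deleteVertices H T) (i : ι) : e i ∉ T i :=
  (mem_filter.1 he).2 i

variable [∀ i, Fintype (α i)]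

-- Inclusion-exclusion inside the complete link of `x`, for the edges of `H` and the edges
-- avoiding `T`.
lemma degree_add_prod_le [DecidableEq ι] (H : PartiteHypergraph α) {T : ∀ i, Finset (α i)} {i : ι}
    {x : α i} (hx : x ∉ T i) :
    degree H i x + ∏ j ∈ univ.erase i, (Fintype.card (α j) - #(T j)) ≤
      ∏ j ∈ univ.erase i, Fintype.card (α j) + degree (deleteVertices H T) i x := by
  let K : PartiteHypergraph α := Fintype.piFinset fun j => (T j)ᶜ
  have hK : degree K i x = ∏ j ∈ univ.erase i, (Fintype.card (α j) - #(T j)) := by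
    simp only [← card_compl]
    exact Fintype.card_filter_piFinset_eq_of_mem (fun j => (T j)ᶜ) i (mem_compl.2 hx)
  have huniv : degree (univ : PartiteHypergraph α) i x =
      ∏ j ∈ univ.erase i, Fintype.card (α j) := by
    rw [← Fintype.piFinset_univ]
    exact Fintype.card_filter_piFinset_eq_of_mem (fun j => (univ : Finset (α j))) i (mem_univ x)
  have hinter : {e ∈ H | e i = x} ∩ {e ∈ K | e i = x} = {e ∈ deleteVertices H T | e i = x} := by
    ext e
    simp only [K, deleteVertices, mem_inter, mem_filter, Fintype.mem_piFinset, mem_compl]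
    tauto
  calc degree H i x + ∏ j ∈ univ.erase i, (Fintype.card (α j) - #(T j))
      = #({e ∈ H | e i = x} ∪ {e ∈ K | e i = x}) + degree (deleteVertices H T) i x := by
        rw [← hK, degree, degree, degree, ← hinter, card_union_add_card_inter]
    _ ≤ degree (univ : PartiteHypergraph α) i x + degree (deleteVertices H T) i x := by
        gcongr
        rw [← filter_union]
        exact degree_mono (subset_univ _) i x
    _ = _ := by rw [huniv]

variable [Nontrivial ι] {H : PartiteHypergraph α} {B m : ℕ}

lemma card_add_sum_card_heavyVertices_le (hB : ∀ i x j y, i ≠ j → codegree H i x j y ≤ B)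
    (hm : ∀ M ⊆ H, IsMatching M → #M ≤ m) {M : PartiteHypergraph α} (hM : IsMatching M)
    (hMH : M ⊆ deleteVertices H (heavyVertices H ((Fintype.card ι - 1) * m * B))) :
    #M + ∑ i, #(heavyVertices H ((Fintype.card ι - 1) * m * B) i) ≤ m := by
  set T := heavyVertices H ((Fintype.card ι - 1) * m * B)
  rw [← card_sigma]
  by_contra! hlt
  have hMm : #M ≤ m := hm M (hMH.trans (deleteVertices_subset H T)) hM
  obtain ⟨S, hST, hS⟩ := exists_subset_card_eq (show m + 1 - #M ≤ #(univ.sigma T) by omega)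
  obtain ⟨N, hNH, hN, hNcard⟩ := hM.exists_extension hB (S := S) (m := m)
    (fun v hv => mem_heavyVertices.1 (mem_sigma.1 (hST hv)).2)
    (hMH.trans (deleteVertices_subset H T))
    (fun e he i hi => notMem_of_mem_deleteVertices (hMH he) i (mem_sigma.1 (hST hi)).2)
    (by omega)
  have := hm N hNH hN
  omega

lemma card_deleteVertices_heavyVertices_le (hB : ∀ i x j y, i ≠ j → codegree H i x j y ≤ B)
    (hm : ∀ M ⊆ H, IsMatching M → #M ≤ m) :
    #(deleteVertices H (heavyVertices H ((Fintype.card ι - 1) * m * B))) ≤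
      (m - ∑ i, #(heavyVertices H ((Fintype.card ι - 1) * m * B) i)) * Fintype.card ι *
        ((Fintype.card ι - 1) * m * B) := by
  refine card_le_mul_of_degree_le (fun e he i => ?_) fun M hMG hM =>
    Nat.le_sub_of_add_le (card_add_sum_card_heavyVertices_le hB hm hM hMG)
  have hlight := notMem_of_mem_deleteVertices he i
  rw [mem_heavyVertices, not_lt] at hlight
  exact (degree_mono (deleteVertices_subset H _) i (e i)).trans hlight

end Deletion

section Tripartite

variable {α : Fin 3 → Type*}

lemma exists_third_index {i j : Fin 3} (hij : i ≠ j) :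
    ∃ k, ∀ l, l ≠ i → l ≠ j → l = k := by
  decide +revert

lemma sum_eq_add_add_of_cyclic (f : Fin 3 → ℕ) (i : Fin 3) :
    ∑ j, f j = f (i + 1) + f (i + 2) + f i := by
  rw [← Equiv.sum_comp (Equiv.addLeft i) f, Fin.sum_univ_three]
  simp only [Equiv.coe_addLeft, add_zero]
  ring

lemma prod_erase_eq_mul_of_cyclic (f : Fin 3 → ℕ) (i : Fin 3) :
    ∏ j ∈ univ.erase i, f j = f (i + 1) * f (i + 2) := by
  have herase : univ.erase i = {i + 1, i + 2} := by decide +revert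
  rw [herase, prod_pair (by decide +revert)]

lemma ext_of_third {i j k : Fin 3} (hk : ∀ l, l ≠ i → l ≠ j → l = k) {e f : ∀ i, α i}
    (hi : e i = f i) (hj : e j = f j) (hek : e k = f k) : e = f := by
  funext l
  by_cases hli : l = i
  · exact hli ▸ hi
  by_cases hlj : l = j
  · exact hlj ▸ hj
  · exact hk l hli hlj ▸ hek

lemma codegree_le_card [∀ i, DecidableEq (α i)] [∀ i, Fintype (α i)] {n : ℕ}
    (hn : ∀ i, Fintype.card (α i) ≤ n) (H : PartiteHypergraph α) {i j : Fin 3} (hij : i ≠ j)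
    (x : α i) (y : α j) : codegree H i x j y ≤ n := by
  obtain ⟨k, hk⟩ := exists_third_index hij
  refine (card_le_card_of_injOn (t := univ) (fun e => e k) (fun _ _ => mem_univ _) ?_).trans
    (hn k)
  intro e he f hf hef
  obtain ⟨-, hei, hej⟩ := mem_filter.1 he
  obtain ⟨-, hfi, hfj⟩ := mem_filter.1 hf
  exact ext_of_third hk (hei.trans hfi.symm) (hej.trans hfj.symm) hef

lemma IsIntersecting.eq_third {H : PartiteHypergraph α} (hH : IsIntersecting H) {i j k : Fin 3}
    (hk : ∀ l, l ≠ i → l ≠ j → l = k) {e f : ∀ i, α i} (he : e ∈ H) (hf : f ∈ H)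
    (hi : e i ≠ f i) (hj : e j ≠ f j) : e k = f k := by
  obtain ⟨l, hl⟩ := hH e he f hf
  obtain rfl := hk l (fun h => hi (h ▸ hl)) (fun h => hj (h ▸ hl))
  exact hl

variable [∀ i, DecidableEq (α i)] [∀ i, Fintype (α i)]

-- If two edges differed only in class `k`, every edge would meet their common pair of vertices.
-- An edge through some `x ≠ e i` would then be determined by `e j` and an edge through some
-- `y ≠ e j`, so only one edge could contain `x`.
lemma IsIntersecting.eq_of_eq_of_eq {H : PartiteHypergraph α} (hH : IsIntersecting H)
    {i j : Fin 3} (hij : i ≠ j) (hi : 1 < #(heavyVertices H 1 i))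
    (hj : 1 < #(heavyVertices H 1 j)) {e f : ∀ i, α i} (he : e ∈ H) (hf : f ∈ H)
    (hei : e i = f i) (hej : e j = f j) : e = f := by
  obtain ⟨k, hk⟩ := exists_third_index hij
  by_contra hef
  have hcover : ∀ g ∈ H, g i = e i ∨ g j = e j := by
    intro g hg
    by_contra! hge
    have hgek := hH.eq_third hk hg he hge.1 hge.2
    have hgfk := hH.eq_third hk hg hf (hei ▸ hge.1) (hej ▸ hge.2)
    exact hef (ext_of_third hk hei hej (hgek.symm.trans hgfk))
  obtain ⟨x, hx, hxe⟩ := exists_mem_ne hi (e i)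
  obtain ⟨y, hy, hye⟩ := exists_mem_ne hj (e j)
  obtain ⟨h, hh, -, -, -, hhy, -⟩ := exists_ne_of_one_lt_degree (mem_heavyVertices.1 hy)
  have hhi : h i = e i := (hcover h hh).resolve_right (hhy.trans_ne hye)
  have hthrough : ∀ g ∈ H, g i = x → g j = e j ∧ g k = h k := by
    intro g hg hgx
    have hgj : g j = e j := (hcover g hg).resolve_left (hgx.trans_ne hxe)
    refine ⟨hgj, hH.eq_third hk hg hh ?_ ?_⟩
    · rwa [hgx, hhi]
    · rw [hgj, hhy]
      exact hye.symm
  obtain ⟨g, hg, g', hg', hgg', hgx, hgx'⟩ := exists_ne_of_one_lt_degree (mem_heavyVertices.1 hx)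
  obtain ⟨hgj, hgk⟩ := hthrough g hg hgx
  obtain ⟨hgj', hgk'⟩ := hthrough g' hg' hgx'
  exact hgg' (ext_of_third hk (hgx.trans hgx'.symm) (hgj.trans hgj'.symm) (hgk.trans hgk'.symm))

lemma not_isIntersecting_of_two_lt_card_heavyVertices {H : PartiteHypergraph α}
    (hH : ∀ i, 2 < #(heavyVertices H 1 i)) : ¬IsIntersecting H := by
  intro hint
  have hlinear {i j : Fin 3} (hij : i ≠ j) {e f : ∀ i, α i} (he : e ∈ H) (hf : f ∈ H)
      (hei : e i = f i) (hej : e j = f j) : e = f :=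
    hint.eq_of_eq_of_eq hij (one_lt_two.trans (hH i)) (one_lt_two.trans (hH j)) he hf hei hej
  obtain ⟨x, hx⟩ := card_pos.1 (two_pos.trans (hH 0))
  obtain ⟨e, he, f, hf, hef, hex, hfx⟩ := exists_ne_of_one_lt_degree (mem_heavyVertices.1 hx)
  have hef2 : e 2 ≠ f 2 := fun h => hef (hlinear (by decide) he hf (hex.trans hfx.symm) h)
  obtain ⟨y, hy, hyef⟩ := exists_mem_notMem_of_card_lt_card (card_le_two.trans_lt (hH 1) :
    #{e 1, f 1} < _)
  simp only [mem_insert, mem_singleton, not_or] at hyef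
  have hthird : ∀ l : Fin 3, l ≠ 0 → l ≠ 1 → l = 2 := by decide
  have hthrough : ∀ g ∈ H, g 1 = y → g 0 = x := by
    intro g hg hgy
    by_contra hgx
    have hge := hint.eq_third hthird hg he (hex ▸ hgx) (hgy.trans_ne hyef.1)
    have hgf := hint.eq_third hthird hg hf (hfx ▸ hgx) (hgy.trans_ne hyef.2)
    exact hef2 (hge.symm.trans hgf)
  obtain ⟨g, hg, g', hg', hgg', hgy, hgy'⟩ := exists_ne_of_one_lt_degree (mem_heavyVertices.1 hy)
  exact hgg' (hlinear zero_ne_one hg hg' ((hthrough g hg hgy).trans (hthrough g' hg' hgy').symm)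
    (hgy.trans hgy'.symm))

end Tripartite

end PartiteHypergraph

/-- A lower bound for the degrees that remain in one class after `a` and `b` vertices have been
deleted from the other two, when all degrees exceed `d3 n r s`. It is an integer because it may be
negative. -/
def residualDegree (n r s a b : ℕ) : ℤ :=
  d3 n r s + 1 + (n - a) * (n - b) - n ^ 2

-- In all three cases `d3 n r s = n ^ 2 - (n - u) * (n - v)`, plus one if `s = 1`, where
-- `u = r + s / 3` and `v = r + s / 2` (rounded down) satisfy `u + v = 2 * r + s - 1`.
lemma residualDegree_eq {n r s : ℕ} (hs1 : 1 ≤ s) (hs3 : s ≤ 3) (hr : r < n) (a b : ℕ) :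
    residualDegree n r s a b = n * (2 * r + s - 1 - a - b) + a * b -
      ((r + s / 3 : ℕ) : ℤ) * (r + s / 2 : ℕ) + if s = 1 then 2 else 1 := by
  obtain ⟨k, rfl⟩ := Nat.exists_eq_add_of_lt hr
  have hk : r + k + 1 - r = k + 1 := by omega
  have hsq : (k + 1) ^ 2 ≤ (r + k + 1) ^ 2 := by gcongr; omega
  have hprod : (k + 1) * k ≤ (r + k + 1) ^ 2 := by nlinarith
  have hsq' : k ^ 2 ≤ (r + k + 1) ^ 2 := by gcongr; omega
  obtain rfl | rfl | rfl : s = 1 ∨ s = 2 ∨ s = 3 := by omega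
  all_goals
    simp only [residualDegree, d3, hk, Nat.add_sub_cancel, reduceIte, OfNat.ofNat_ne_one,
      Nat.reduceEqDiff, Nat.reduceDiv]
    push_cast [hsq, hprod, hsq']
    ring

lemma residualDegree_one_self {n r : ℕ} (hr : r < n) : residualDegree n r 1 r r = 2 := by
  rw [residualDegree_eq le_rfl (by norm_num) hr]
  simp only [Nat.reduceDiv, add_zero, reduceIte, Nat.cast_one]
  ring

lemma mul_le_two_mul_residualDegree {n r s a b : ℕ} (hs1 : 1 ≤ s) (hs3 : s ≤ 3)
    (hn : 22 * (r + 1) ≤ n) (ha : 2 * a + b ≤ 3 * r + s) (hb : a + 2 * b ≤ 3 * r + s)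
    (hab : a + b + 1 < 2 * r + s) :
    (n : ℤ) * (2 * r + s - 1 - a - b) ≤ 2 * residualDegree n r s a b := by
  obtain ⟨D, hD⟩ : ∃ D : ℤ, D = 2 * r + s - 1 - a - b := ⟨_, rfl⟩
  have hbase : ((r + s / 3 : ℕ) : ℤ) * (r + s / 2 : ℕ) ≤ (r + 1) ^ 2 := by
    rw [sq]; gcongr <;> omega
  have hdefect : ((r : ℤ) + 1) ^ 2 - a * b ≤ 11 * (r + 1) * D := by
    have hprod : 0 ≤ (r + 1 + D - a) * (r + 1 + D - b) := mul_nonneg (by omega) (by omega)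
    have hs : 0 ≤ (r + 1 + D) * (2 * D - 3 + s) := mul_nonneg (by omega) (by omega)
    have hDr : 0 ≤ D * (2 * (r + 1) - D) := mul_nonneg (by omega) (by omega)
    linear_combination hprod + hs + 4 * hDr - (r + 1 + D) * hD
  have hscale : 22 * ((r : ℤ) + 1) * D ≤ n * D :=
    mul_le_mul_of_nonneg_right (by omega) (by omega)
  rw [residualDegree_eq hs1 hs3 (by omega), ← hD]
  split_ifs <;> linarith

lemma residualDegree_pos {n r s a b : ℕ} (hs1 : 1 ≤ s) (hs3 : s ≤ 3) (hr : r < n)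
    (ha : 2 * a + b ≤ 3 * r + s) (hb : a + 2 * b ≤ 3 * r + s) (hab : a + b + 1 = 2 * r + s) :
    0 < residualDegree n r s a b := by
  have hD : (2 * r + s - 1 - a - b : ℤ) = 0 := by omega
  rw [residualDegree_eq hs1 hs3 hr, hD]
  have hprod : 0 ≤ ((r : ℤ) + 1 - a) * (r + 1 - b) := mul_nonneg (by omega) (by omega)
  obtain rfl | rfl | rfl : s = 1 ∨ s = 2 ∨ s = 3 := by omega
  all_goals
    norm_num at hD ⊢
    linear_combination hprod + (r + 1) * hD

lemma mul_lt_mul_residualDegree {n r s a b c : ℕ} (hs1 : 1 ≤ s) (hs3 : s ≤ 3)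
    (hn : 31 * (3 * r + s) < n) (hac : a ≤ c) (hbc : b ≤ c) (habc : a + b + c ≤ 3 * r + s)
    (hextremal : ¬(s = 1 ∧ a = r ∧ b = r ∧ c = r)) :
    (3 * (3 * r + s - (a + b + c)) * (2 * (3 * r + s) * n) : ℤ) <
      (n - c) * residualDegree n r s a b := by
  have hc : (0 : ℤ) < n - c := by omega
  rcases lt_or_ge (a + b + 1) (2 * r + s) with hab | hab
  · obtain ⟨D, hD⟩ : ∃ D : ℤ, D = 2 * r + s - 1 - a - b := ⟨_, rfl⟩
    have hq := mul_le_two_mul_residualDegree (n := n) hs1 hs3 (by omega) (by omega) (by omega) hab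
    rw [← hD] at hq
    have hn0 : (0 : ℤ) < n := by omega
    have hD0 : 0 < D := by omega
    have hslack : 2 * (3 * r + s - (a + b + c)) ≤ 5 * D := by omega
    refine lt_of_mul_lt_mul_left ?_ (zero_le_two (α := ℤ))
    calc 2 * (3 * (3 * r + s - (a + b + c)) * (2 * (3 * r + s) * n) : ℤ)
        = 2 * (3 * r + s - (a + b + c)) * (6 * (3 * r + s) * n) := by ring
      _ ≤ 5 * D * (6 * (3 * r + s) * n) := by gcongr
      _ = 30 * (3 * r + s) * (n * D) := by ring
      _ < (n - c) * (n * D) := by gcongr; omega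
      _ ≤ (n - c) * (2 * residualDegree n r s a b) := mul_le_mul_of_nonneg_left hq hc.le
      _ = 2 * ((n - c) * residualDegree n r s a b) := by ring
  · have hslack : (3 * r + s - (a + b + c) : ℤ) = 0 := by omega
    rw [hslack, mul_zero, zero_mul]
    exact mul_pos hc (residualDegree_pos hs1 hs3 (by omega) (by omega) (by omega) (by omega))

namespace PartiteHypergraph

variable {α : Fin 3 → Type*} [∀ i, DecidableEq (α i)] [∀ i, Fintype (α i)]
  {n r s : ℕ} {H : PartiteHypergraph α} {T : ∀ i, Finset (α i)}

lemma residualDegree_le_degree (hα : ∀ i, Fintype.card (α i) = n)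
    {i : Fin 3} {x : α i} (hδ : d3 n r s < degree H i x) (hx : x ∉ T i) :
    residualDegree n r s #(T (i + 1)) #(T (i + 2)) ≤ degree (deleteVertices H T) i x := by
  have hTn : ∀ j, #(T j) ≤ n := fun j => hα j ▸ card_le_univ (T j)
  have hdeg := degree_add_prod_le H hx
  simp only [prod_erase_eq_mul_of_cyclic, hα] at hdeg
  rw [residualDegree]
  zify [hTn] at hdeg hδ
  linarith

lemma card_eq_of_card_deleteVertices_le (hs1 : 1 ≤ s) (hs3 : s ≤ 3) (hn : 31 * (3 * r + s) < n)
    (hα : ∀ i, Fintype.card (α i) = n) (hδ : ∀ i x, d3 n r s < degree H i x)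
    (hT : ∑ i, #(T i) ≤ 3 * r + s)
    (hcard : #(deleteVertices H T) ≤ (3 * r + s - ∑ i, #(T i)) * 3 * (2 * (3 * r + s) * n)) :
    s = 1 ∧ ∀ i, #(T i) = r := by
  obtain ⟨c, hc⟩ := Finite.exists_max fun i => #(T i)
  rw [sum_eq_add_add_of_cyclic _ c] at hT hcard
  have hlower : ((n : ℤ) - #(T c)) * residualDegree n r s #(T (c + 1)) #(T (c + 2)) ≤
      #(deleteVertices H T) := by
    have hcompl : (#(T c)ᶜ : ℤ) = n - #(T c) := by
      rw [card_compl, hα, Nat.cast_sub (by omega)]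
    rw [← hcompl]
    exact card_mul_le_card_of_le_degree fun x hx =>
      residualDegree_le_degree hα (hδ c x) (mem_compl.1 hx)
  by_contra hne
  refine (mul_lt_mul_residualDegree hs1 hs3 hn (hc _) (hc _) hT ?_).not_ge (hlower.trans ?_)
  · rintro ⟨hs, h1, h2, h0⟩
    refine hne ⟨hs, fun i => ?_⟩
    obtain rfl | rfl | rfl : i = c + 1 ∨ i = c + 2 ∨ i = c := by clear * -; decide +revert
    exacts [h1, h2, h0]
  · zify [hT] at hcard
    linarith

lemma two_lt_card_heavyVertices_deleteVertices (hr : r + 2 < n)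
    (hα : ∀ i, Fintype.card (α i) = n) (hδ : ∀ i x, d3 n r 1 < degree H i x)
    (hT : ∀ i, #(T i) = r) (i : Fin 3) : 2 < #(heavyVertices (deleteVertices H T) 1 i) := by
  have hsub : (T i)ᶜ ⊆ heavyVertices (deleteVertices H T) 1 i := by
    intro x hx
    have hdeg := residualDegree_le_degree hα (hδ i x) (mem_compl.1 hx)
    rw [hT, hT, residualDegree_one_self (by omega)] at hdeg
    exact mem_heavyVertices.2 (by omega)
  have hcard := card_le_card hsub
  rw [card_compl, hα, hT] at hcard
  omega

end PartiteHypergraph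

open PartiteHypergraph in
theorem matching_of_degree_threshold_general {α : Fin 3 → Type*} [∀ i, DecidableEq (α i)]
    [∀ i, Fintype (α i)] {n r s : ℕ} (hs1 : 1 ≤ s) (hs3 : s ≤ 3) (hn : 31 * (3 * r + s) < n)
    (hα : ∀ i, Fintype.card (α i) = n) (H : PartiteHypergraph α)
    (hδ : ∀ i x, d3 n r s < degree H i x) :
    ∃ M ⊆ H, IsMatching M ∧ #M = 3 * r + s + 1 := by
  by_contra! hno
  have hm : ∀ M ⊆ H, IsMatching M → #M ≤ 3 * r + s := by
    intro M hMH hM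
    by_contra! hlt
    obtain ⟨N, hNM, hN⟩ := exists_subset_card_eq hlt
    exact hno N (hNM.trans hMH) (hM.subset hNM) hN
  have hcodegree : ∀ i x j y, i ≠ j → codegree H i x j y ≤ n := fun i x j y hij =>
    codegree_le_card (fun i => (hα i).le) H hij x y
  set T := heavyVertices H (2 * (3 * r + s) * n)
  have hsum : ∀ M ⊆ deleteVertices H T, IsMatching M → #M + ∑ i, #(T i) ≤ 3 * r + s :=
    fun M hMG hM => card_add_sum_card_heavyVertices_le hcodegree hm hM hMG
  have hT : ∑ i, #(T i) ≤ 3 * r + s := by simpa using hsum ∅ (empty_subset _) isMatching_empty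
  obtain ⟨rfl, hTr⟩ := card_eq_of_card_deleteVertices_le hs1 hs3 hn hα hδ hT
    (card_deleteVertices_heavyVertices_le hcodegree hm)
  refine not_isIntersecting_of_two_lt_card_heavyVertices
    (two_lt_card_heavyVertices_deleteVertices (by omega) hα hδ hTr)
    (isIntersecting_of_card_le_one fun M hMG hM => ?_)
  have hMT := hsum M hMG hM
  simp only [hTr, sum_const, card_univ, Fintype.card_fin, smul_eq_mul] at hMT
  omega

/-- Let `r ≥ 0` and `1 ≤ s ≤ 3`. If `H` is a 3-partite 3-graph with classes of size
`n ≥ 3⁷·(3r+s+1)` and `δ₁(H) > d₃(n,r,s)`, then `H` contains a matching of size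
`3r+s+1`. -/
theorem matching_of_degree_threshold (n r s : ℕ) (hs1 : 1 ≤ s) (hs3 : s ≤ 3)
    (hn : 3 ^ 7 * (3 * r + s + 1) ≤ n)
    (H : Finset (Fin 3 → Fin n))
    (hδ : ∀ (c : Fin 3) (x : Fin n), d3 n r s < deg3 H c x) :
    ∃ M : Finset (Fin 3 → Fin n), M ⊆ H ∧
      (∀ e ∈ M, ∀ f ∈ M, e ≠ f → ∀ i, e i ≠ f i) ∧
      M.card = 3 * r + s + 1 := by
  obtain ⟨M, hMH, hM, hcard⟩ := matching_of_degree_threshold_general hs1 hs3 (by omega)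
    (fun _ => Fintype.card_fin n) H hδ
  exact ⟨M, hMH, fun e he f hf => hM he hf, hcard⟩
end

section
/- There is a constant c > 0 such that for all γ > 0, every 3-partite 3-graph H with n > c·γ^{-12} vertices in each class and minimum vertex degree δ_1(H) ≥ (5/9 + γ)·n^2 contains a perfect matching. -/
/-!
A `3 × 3` array of vertices whose rows are edges absorbs a triple `t` if its diagonal and the three
rows with their diagonal entries replaced by `t` are edges as well: its vertices can then be matched
both with and without those of `t`. Each `t` is absorbed by a positive proportion of all arrays, so
a small family of disjoint arrays contains many absorbers of every triple.

Outside this family, a maximum matching `M` misses few vertices. Suppose that it leaves a large set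
`L` uncovered, and call a pair of vertices heavy if it forms edges with many vertices of `L`. The
heavy pairs have density more than `5 / 9` between any two classes, and so they do, by a second
moment argument, inside the vertex set of some `R ^ 2` edges of `M`. The Tutte-Berge formula then
yields `R ^ 2 + 1` disjoint heavy pairs there; extended by distinct vertices of `L`, they replace
the `R ^ 2` edges and enlarge `M`. The few vertices missed by `M` are absorbed.
-/

section PerfectMatchings

open Finset Function

section Sampling

variable {ι α : Type*} [Fintype ι] [DecidableEq ι] [Fintype α]

lemma sum_sum_update {M : Type*} [AddCommMonoid M] (F : (ι → α) → M) (a : ι) :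
    ∑ f : ι → α, ∑ x, F (update f a x) = Fintype.card α • ∑ f, F f := by
  have swap_involutive : Involutive fun p : (ι → α) × α ↦ (update p.1 a p.2, p.1 a) := by
    rintro ⟨f, x⟩
    simp
  have := Equiv.sum_comp swap_involutive.toPerm fun p : (ι → α) × α ↦ F p.1
  simpa only [Involutive.coe_toPerm, Fintype.sum_prod_type, sum_const, card_univ, smul_sum]
    using this

lemma card_mul_card_filter_apply_eq [DecidableEq α] (a : ι) (g : (ι → α) → α)
    (hg : ∀ f x, g (update f a x) = g f) :
    Fintype.card α * #{f | f a = g f} = Fintype.card α ^ Fintype.card ι := by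
  rw [card_filter, ← smul_eq_mul, ← sum_sum_update _ a]
  simp [hg]

lemma card_filter_curry_apply_eq {κ : Type*} [Fintype κ] [DecidableEq κ] [DecidableEq α]
    (k : κ) (a : ι) (g : (κ → ι → α) → α) (hg : ∀ A v, g (update A k v) = g A) :
    Fintype.card α * #{A : κ → ι → α | A k a = g A} =
      Fintype.card α ^ (Fintype.card κ * Fintype.card ι) := by
  rw [← Fintype.card_prod, ← card_mul_card_filter_apply_eq (k, a) (fun f ↦ g (curry f))]
  · congr 1
    exact card_equiv (Equiv.curry κ ι α).symm fun A ↦ by simp [Equiv.curry]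
  · intro f x
    rw [← hg (curry f) (curry (update f (k, a) x) k)]
    refine congrArg g ?_
    ext i j
    by_cases hi : i = k <;> simp [hi, curry, update_apply]

lemma sum_mul_eq_zero_of_independent (h : α → α → ℝ) (h_mean : ∑ x, ∑ y, h x y = 0) {a b : ι}
    (hab : a ≠ b) (φ : (ι → α) → ℝ) (ha : ∀ f x, φ (update f a x) = φ f)
    (hb : ∀ f x, φ (update f b x) = φ f) : ∑ f : ι → α, h (f a) (f b) * φ f = 0 := by
  rcases isEmpty_or_nonempty α with _ | _
  · exact sum_eq_zero fun f _ ↦ isEmptyElim (f a)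
  have resample := sum_sum_update (fun f : ι → α ↦ ∑ x, h x (f b) * φ f) b
  have h_inner : ∑ f : ι → α, ∑ x, h x (f b) * φ f
      = Fintype.card α • ∑ f : ι → α, h (f a) (f b) * φ f := by
    simp [← sum_sum_update _ a, ha, hab.symm]
  simp only [update_self, hb, ← sum_mul, sum_comm (f := fun x y ↦ h y x), h_mean, zero_mul,
    sum_const_zero] at resample
  simp only [sum_mul, h_inner] at resample
  simpa using resample.symm

lemma sum_sq_sum_le (h : α → α → ℝ) (h_mean : ∑ x, ∑ y, h x y = 0) (h_le : ∀ x y, |h x y| ≤ 1) :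
    ∑ f : ι → α, (∑ p : ι × ι, h (f p.1) (f p.2)) ^ 2
      ≤ 5 * Fintype.card ι ^ 3 * Fintype.card α ^ Fintype.card ι := by
  let collision (a b c d : ι) : ℝ := (if a = b then 1 else 0) + (if a = c then 1 else 0) +
    (if a = d then 1 else 0) + (if b = c then 1 else 0) + (if b = d then 1 else 0)
  have h_mul_le (x y z w : α) : h x y * h z w ≤ 1 :=
    (le_abs_self _).trans <| abs_mul (h x y) _ ▸ mul_le_one₀ (h_le ..) (abs_nonneg _) (h_le ..)
  have h_term (a b c d : ι) : ∑ f : ι → α, h (f a) (f b) * h (f c) (f d)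
      ≤ collision a b c d * Fintype.card α ^ Fintype.card ι := by
    by_cases distinct : a ≠ b ∧ a ≠ c ∧ a ≠ d ∧ b ≠ c ∧ b ≠ d
    · obtain ⟨hab, hac, had, hbc, hbd⟩ := distinct
      rw [sum_mul_eq_zero_of_independent h h_mean hab (fun f ↦ h (f c) (f d))
        (fun f x ↦ by simp [hac.symm, had.symm]) fun f x ↦ by simp [hbc.symm, hbd.symm]]
      positivity
    · have one_le : 1 ≤ collision a b c d := by
        simp only [collision]
        grind
      calc ∑ f : ι → α, h (f a) (f b) * h (f c) (f d)
          ≤ ∑ _f : ι → α, (1 : ℝ) := sum_le_sum fun f _ ↦ h_mul_le ..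
        _ = 1 * Fintype.card α ^ Fintype.card ι := by simp
        _ ≤ _ := by gcongr
  calc ∑ f : ι → α, (∑ p : ι × ι, h (f p.1) (f p.2)) ^ 2
      = ∑ p : ι × ι, ∑ q : ι × ι, ∑ f : ι → α, h (f p.1) (f p.2) * h (f q.1) (f q.2) := by
        simp only [sq, sum_mul_sum]
        rw [sum_comm]
        exact sum_congr rfl fun p _ ↦ sum_comm
    _ ≤ ∑ p : ι × ι, ∑ q : ι × ι,
          collision p.1 p.2 q.1 q.2 * Fintype.card α ^ Fintype.card ι := by
        gcongr
        exact h_term ..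
    _ = _ := by
        simp only [← sum_mul, Fintype.sum_prod_type]
        congr 1
        simp [collision, sum_add_distrib]
        ring

lemma card_mul_sum_collisions_le [DecidableEq α] :
    Fintype.card α * ∑ f : ι → α, #{p : ι × ι | p.1 ≠ p.2 ∧ f p.1 = f p.2}
      ≤ Fintype.card ι ^ 2 * Fintype.card α ^ Fintype.card ι := by
  have h_pair (p : ι × ι) : Fintype.card α * #{f : ι → α | p.1 ≠ p.2 ∧ f p.1 = f p.2}
      ≤ Fintype.card α ^ Fintype.card ι := by
    by_cases hp : p.1 = p.2
    · simp [hp]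
    · simpa [hp] using (card_mul_card_filter_apply_eq p.1 (fun f : ι → α ↦ f p.2)
        fun f x ↦ update_of_ne (Ne.symm hp) ..).le
  calc Fintype.card α * ∑ f : ι → α, #{p : ι × ι | p.1 ≠ p.2 ∧ f p.1 = f p.2}
      = ∑ p : ι × ι, Fintype.card α * #{f : ι → α | p.1 ≠ p.2 ∧ f p.1 = f p.2} := by
        simp only [card_filter, ← mul_sum]
        rw [sum_comm]
    _ ≤ ∑ _p : ι × ι, Fintype.card α ^ Fintype.card ι := sum_le_sum fun p _ ↦ h_pair p
    _ = _ := by simp [sq]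

lemma sum_sub_mean_eq_zero [Nonempty α] (w : α → α → ℝ) :
    ∑ x, ∑ y, (w x y - (∑ x, ∑ y, w x y) / Fintype.card α ^ 2) = 0 := by
  simp only [sum_sub_distrib, sum_const, card_univ, nsmul_eq_mul]
  field_simp
  ring

lemma abs_sub_mean_le_one (w : α → α → ℝ) (hw : ∀ x y, w x y ∈ Set.Icc 0 1) (x y : α) :
    |w x y - (∑ x, ∑ y, w x y) / Fintype.card α ^ 2| ≤ 1 := by
  have h_mean : (∑ x, ∑ y, w x y) / Fintype.card α ^ 2 ∈ Set.Icc (0 : ℝ) 1 := by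
    refine ⟨div_nonneg (sum_nonneg fun x _ ↦ sum_nonneg fun y _ ↦ (hw x y).1) (by positivity),
      div_le_one_of_le₀ ?_ (by positivity)⟩
    calc ∑ x, ∑ y, w x y ≤ ∑ _x : α, ∑ _y : α, (1 : ℝ) := by gcongr; exact (hw ..).2
      _ = Fintype.card α ^ 2 := by simp [sq]
  have := hw x y
  rw [abs_le]
  constructor <;> linarith [h_mean.1, h_mean.2, this.1, this.2]

lemma exists_injective_of_sum_le [Nonempty ι] {C : ℝ} (hC : 0 < C) {D : (ι → α) → ℝ}
    (hD : ∀ f, 0 ≤ D f) (h_sum : ∑ f, D f ≤ C / 2 * Fintype.card α ^ Fintype.card ι)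
    (h_card : 2 * Fintype.card ι ^ 2 < Fintype.card α) : ∃ f, Injective f ∧ D f ≤ C := by
  classical
  set s := Fintype.card ι
  set n := Fintype.card α
  let collisions (f : ι → α) : Finset (ι × ι) := {p | p.1 ≠ p.2 ∧ f p.1 = f p.2}
  have n_pos : (0 : ℝ) < n := by exact_mod_cast pos_of_gt h_card
  have h_collisions : ∑ f, (#(collisions f) : ℝ) < 1 / 2 * n ^ s := by
    have h_le : (n : ℝ) * ∑ f, (#(collisions f) : ℝ) ≤ s ^ 2 * n ^ s := by
      exact_mod_cast card_mul_sum_collisions_le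
    have : 2 * (s : ℝ) ^ 2 < n := by exact_mod_cast h_card
    refine lt_of_mul_lt_mul_left (h_le.trans_lt ?_) n_pos.le
    nlinarith [pow_pos n_pos s]
  obtain ⟨f, -, hf⟩ : ∃ f ∈ univ, D f + C * #(collisions f) < C := by
    refine exists_lt_of_sum_lt ?_
    rw [sum_add_distrib, ← mul_sum]
    simp only [sum_const, card_univ, Fintype.card_fun, nsmul_eq_mul, Nat.cast_pow]
    nlinarith
  refine ⟨f, fun a b hab ↦ ?_, by nlinarith [Nat.cast_nonneg (α := ℝ) #(collisions f)]⟩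
  by_contra hne
  have : (1 : ℝ) ≤ #(collisions f) := by
    exact_mod_cast card_pos.2 ⟨(a, b), by simp [collisions, hne, hab]⟩
  nlinarith [hD f]

omit [DecidableEq ι] in
lemma exists_injective_sample {κ : Type*} [Fintype κ] [Nonempty κ] [Nonempty ι]
    (w : κ → α → α → ℝ) (hw : ∀ k x y, w k x y ∈ Set.Icc 0 1)
    (h_card : 2 * Fintype.card ι ^ 2 < Fintype.card α) :
    ∃ f : ι → α, Injective f ∧ ∀ k,
      (∑ a, ∑ b, w k (f a) (f b)
          - Fintype.card ι ^ 2 * ((∑ x, ∑ y, w k x y) / Fintype.card α ^ 2)) ^ 2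
        ≤ 10 * Fintype.card κ * Fintype.card ι ^ 3 := by
  classical
  set s := Fintype.card ι
  set n := Fintype.card α
  set C : ℝ := 10 * Fintype.card κ * s ^ 3
  let h (k : κ) (x y : α) : ℝ := w k x y - (∑ x, ∑ y, w k x y) / n ^ 2
  let deviation (k : κ) (f : ι → α) : ℝ := (∑ p : ι × ι, h k (f p.1) (f p.2)) ^ 2
  have h_deviation : ∑ f, ∑ k, deviation k f ≤ C / 2 * n ^ s := by
    rw [sum_comm]
    calc _ ≤ ∑ k : κ, 5 * (s : ℝ) ^ 3 * n ^ s := by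
          have : Nonempty α := Fintype.card_pos_iff.1 (pos_of_gt h_card)
          exact sum_le_sum fun k _ ↦
            sum_sq_sum_le (h k) (sum_sub_mean_eq_zero _) (abs_sub_mean_le_one _ (hw k))
      _ = _ := by simp [C]; ring
  obtain ⟨f, hf_inj, hf⟩ :=
    exists_injective_of_sum_le (by positivity) (fun f ↦ by positivity) h_deviation h_card
  refine ⟨f, hf_inj, fun k ↦ ?_⟩
  have h_centered : ∑ p : ι × ι, h k (f p.1) (f p.2)
      = ∑ a, ∑ b, w k (f a) (f b) - s ^ 2 * ((∑ x, ∑ y, w k x y) / n ^ 2) := by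
    simp [h, sum_sub_distrib, Fintype.sum_prod_type, sq, s]
  rw [← h_centered]
  exact (single_le_sum (f := fun k ↦ deviation k f) (fun _ _ ↦ sq_nonneg _) (mem_univ k)).trans hf

end Sampling

section TutteBerge

/-- The join of `G` with a complete graph on `d` new vertices. -/
def joinComplete {V : Type*} (G : SimpleGraph V) (d : ℕ) : SimpleGraph (V ⊕ Fin d) where
  Adj x y := x ≠ y ∧ ∀ a b, x = Sum.inl a → y = Sum.inl b → G.Adj a b
  symm := ⟨fun _ _ h ↦ ⟨h.1.symm, fun a b ha hb ↦ (h.2 b a hb ha).symm⟩⟩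
  loopless := ⟨fun _ h ↦ h.1 rfl⟩

variable {V : Type*} {G : SimpleGraph V} {d : ℕ}

lemma joinComplete_adj_inl {a b : V} :
    (joinComplete G d).Adj (Sum.inl a) (Sum.inl b) ↔ G.Adj a b := by
  refine ⟨fun h ↦ h.2 a b rfl rfl, fun h ↦ ⟨by simpa using h.ne, ?_⟩⟩
  rintro _ _ ⟨⟩ ⟨⟩
  exact h

lemma joinComplete_adj_inr {i : Fin d} {x : V ⊕ Fin d} (h : Sum.inr i ≠ x) :
    (joinComplete G d).Adj (Sum.inr i) x := ⟨h, by simp⟩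

lemma exists_isMatching_of_joinComplete [Finite V] {M : (joinComplete G d).Subgraph}
    (hM : M.IsPerfectMatching) :
    ∃ N : G.Subgraph, N.IsMatching ∧ Nat.card V ≤ N.verts.ncard + d := by
  let N : G.Subgraph :=
    { verts := {a | ∃ b, M.Adj (Sum.inl a) (Sum.inl b)}
      Adj := fun a b ↦ M.Adj (Sum.inl a) (Sum.inl b)
      adj_sub := fun h ↦ joinComplete_adj_inl.1 h.adj_sub
      edge_vert := fun h ↦ ⟨_, h⟩
      symm := ⟨fun _ _ h ↦ h.symm⟩ }
  refine ⟨N, fun a ⟨b, hb⟩ ↦ ⟨b, hb, fun c hc ↦ ?_⟩, ?_⟩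
  · exact Sum.inl_injective (hM.1.eq_of_adj_left hc hb)
  · choose partner h_partner using fun a ↦ (hM.1 (hM.2 (Sum.inl a))).exists
    have partner_inr : Set.MapsTo partner N.vertsᶜ (Set.range Sum.inr) := fun a ha ↦ by
      rcases h : partner a with b | i
      · exact absurd ⟨b, h ▸ h_partner a⟩ ha
      · exact ⟨i, rfl⟩
    have partner_injective : Injective partner := fun a b hab ↦
      Sum.inl_injective (hM.1.eq_of_adj_right (h_partner a) (hab ▸ h_partner b))
    have : N.vertsᶜ.ncard ≤ d := by
      simpa [← Set.image_univ, Set.ncard_image_of_injective _ Sum.inr_injective] using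
        Set.ncard_le_ncard_of_injOn partner partner_inr partner_injective.injOn
    rw [← N.verts.ncard_add_ncard_compl]
    omega

lemma ncard_oddComponents_congr {W : Type*} {G' : SimpleGraph W} (φ : G ≃g G') :
    G.oddComponents.ncard = G'.oddComponents.ncard := by
  have h_supp (C : G.ConnectedComponent) :
      (φ.connectedComponentEquiv C).supp.ncard = C.supp.ncard :=
    (Nat.card_congr (SimpleGraph.ConnectedComponent.isoEquivSupp φ C)).symm
  refine Set.ncard_congr (fun C _ ↦ φ.connectedComponentEquiv C) (fun C hC ↦ ?_)
    (fun C D _ _ ↦ fun h ↦ φ.connectedComponentEquiv.injective h) fun D hD ↦ ?_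
  · simpa only [Set.mem_ofPred_eq, h_supp] using hC
  · obtain ⟨C, rfl⟩ := φ.connectedComponentEquiv.surjective D
    exact ⟨C, by simpa only [Set.mem_ofPred_eq, h_supp] using hD, rfl⟩

lemma ncard_oddComponents_joinComplete_deleteVerts {u : Set (V ⊕ Fin d)}
    (hu : ∀ i, Sum.inr i ∈ u) :
    ((⊤ : (joinComplete G d).Subgraph).deleteVerts u).coe.oddComponents.ncard =
      ((⊤ : G.Subgraph).deleteVerts (Sum.inl ⁻¹' u)).coe.oddComponents.ncard := by
  let φ : ((⊤ : G.Subgraph).deleteVerts (Sum.inl ⁻¹' u)).verts →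
      ((⊤ : (joinComplete G d).Subgraph).deleteVerts u).verts :=
    fun x ↦ ⟨Sum.inl x, trivial, x.2.2⟩
  have φ_bijective : Bijective φ := by
    refine ⟨fun x y hxy ↦ Subtype.ext (Sum.inl_injective (congrArg Subtype.val hxy)), ?_⟩
    rintro ⟨a | i, -, h⟩
    · exact ⟨⟨a, trivial, h⟩, rfl⟩
    · exact absurd (hu i) h
  refine (ncard_oddComponents_congr ⟨Equiv.ofBijective φ φ_bijective, ?_⟩).symm
  intro x y
  simp [φ, joinComplete_adj_inl]

lemma preconnected_joinComplete_deleteVerts {u : Set (V ⊕ Fin d)} {i : Fin d}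
    (hi : Sum.inr i ∉ u) : ((⊤ : (joinComplete G d).Subgraph).deleteVerts u).coe.Preconnected := by
  have reach (x : ((⊤ : (joinComplete G d).Subgraph).deleteVerts u).verts) :
      ((⊤ : (joinComplete G d).Subgraph).deleteVerts u).coe.Reachable
        ⟨Sum.inr i, trivial, hi⟩ x := by
    by_cases hx : Sum.inr i = x.1
    · obtain rfl : ⟨Sum.inr i, trivial, hi⟩ = x := Subtype.ext hx
      rfl
    · refine SimpleGraph.Adj.reachable ?_
      simp [hi, x.2.2, joinComplete_adj_inr hx]
  exact fun x y ↦ (reach x).symm.trans (reach y)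

theorem exists_isMatching_of_oddComponents_le [Finite V] (h_even : Even (Nat.card V + d))
    (h : ∀ U : Set V,
      ((⊤ : G.Subgraph).deleteVerts U).coe.oddComponents.ncard ≤ U.ncard + d) :
    ∃ M : G.Subgraph, M.IsMatching ∧ Nat.card V ≤ M.verts.ncard + d := by
  obtain ⟨M, hM⟩ : ∃ M : (joinComplete G d).Subgraph, M.IsPerfectMatching := by
    rw [SimpleGraph.tutte]
    intro u violator
    by_cases hu : ∀ i, Sum.inr i ∈ u
    · have u_ncard : u.ncard = (Sum.inl ⁻¹' u : Set V).ncard + d := by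
        have inr_univ : (Sum.inr ⁻¹' u : Set (Fin d)) = Set.univ := Set.eq_univ_of_forall hu
        conv_lhs => rw [← Set.image_preimage_inl_union_image_preimage_inr u]
        rw [Set.ncard_union_eq
          (Set.isCompl_range_inl_range_inr.disjoint.mono
            (Set.image_subset_range ..) (Set.image_subset_range ..)),
          Set.ncard_image_of_injective _ Sum.inl_injective,
          Set.ncard_image_of_injective _ Sum.inr_injective, inr_univ]
        simp
      have := h (Sum.inl ⁻¹' u)
      rw [← ncard_oddComponents_joinComplete_deleteVerts hu, ← u_ncard] at this
      exact violator.not_ge this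
    · obtain ⟨i, hi⟩ := not_forall.1 hu
      have := (preconnected_joinComplete_deleteVerts (G := G) hi).subsingleton_connectedComponent
      have odd_le_one := Set.ncard_le_one_of_subsingleton
        ((⊤ : (joinComplete G d).Subgraph).deleteVerts u).coe.oddComponents
      obtain rfl : u = ∅ := by
        rw [← Set.ncard_eq_zero]
        exact Nat.lt_one_iff.1 (violator.trans_le odd_le_one)
      have not_odd :
          ¬Odd ((⊤ : (joinComplete G d).Subgraph).deleteVerts ∅).coe.oddComponents.ncard := by
        rw [SimpleGraph.odd_ncard_oddComponents, Nat.not_odd_iff_even]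
        simpa using h_even
      simp only [SimpleGraph.IsTutteViolator, Set.ncard_empty] at violator
      exact not_odd (by rw [le_antisymm odd_le_one violator]; exact odd_one)
  exact exists_isMatching_of_joinComplete hM

end TutteBerge

section Density

lemma mul_card_image_le_add {V β : Type*} [DecidableEq β] (S : Finset V) (c : V → β) (R : ℕ) :
    R * #(S.image c) ≤ R * #{x ∈ S | #{y ∈ S | c y = c x} < R}
      + #{x ∈ S | R ≤ #{y ∈ S | c y = c x}} := by
  classical
  have h_split : S.image c ⊆ {x ∈ S | #{y ∈ S | c y = c x} < R}.image c ∪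
      {x ∈ S | R ≤ #{y ∈ S | c y = c x}}.image c := by
    rw [← image_union, ← filter_or]
    simp [lt_or_ge]
  have h_large : R * #({x ∈ S | R ≤ #{y ∈ S | c y = c x}}.image c)
      ≤ #{x ∈ S | R ≤ #{y ∈ S | c y = c x}} := by
    refine mul_card_image_le_card _ _ (fun z hz ↦ ?_)
    obtain ⟨x, hx, rfl⟩ := mem_image.1 hz
    refine (mem_filter.1 hx).2.trans (card_le_card fun y hy ↦ ?_)
    simp_all
  calc R * #(S.image c) ≤ R * (#({x ∈ S | #{y ∈ S | c y = c x} < R}.image c) +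
        #({x ∈ S | R ≤ #{y ∈ S | c y = c x}}.image c)) := by
        gcongr
        exact (card_le_card h_split).trans (card_union_le ..)
    _ ≤ _ := by
        rw [mul_add]
        gcongr
        exact card_image_le

lemma card_interedges_add_le {V β : Type*} [Fintype V] [DecidableEq V] [DecidableEq β]
    (G : SimpleGraph V) [DecidableRel G.Adj] (U X Y : Finset V) (c : V → β) (R : ℕ)
    (hc : ∀ x ∉ U, ∀ y ∉ U, G.Adj x y → c x = c y) :
    #(G.interedges X Y) + #(X \ U) * #(Y \ U) ≤ #X * #Y + #X * R
      + #(X ∩ {x ∈ Uᶜ | R ≤ #{z ∈ Uᶜ | c z = c x}}) *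
        #(Y ∩ {x ∈ Uᶜ | R ≤ #{z ∈ Uᶜ | c z = c x}}) := by
  set B : Finset V := {x ∈ Uᶜ | R ≤ #{z ∈ Uᶜ | c z = c x}}
  let small : Finset (V × V) :=
    {p ∈ X ×ˢ univ | p.2 ∈ Uᶜ ∧ c p.2 = c p.1 ∧ #{z ∈ Uᶜ | c z = c p.1} < R}
  have h_cover : G.interedges X Y ⊆
      ((X ×ˢ Y) \ ((X \ U) ×ˢ (Y \ U))) ∪ small ∪ ((X ∩ B) ×ˢ (Y ∩ B)) := by
    rintro ⟨x, y⟩ hxy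
    obtain ⟨hx, hy, h_adj⟩ := (SimpleGraph.mem_interedges_iff G).1 hxy
    by_cases hU : x ∈ U ∨ y ∈ U
    · simp only [mem_union, mem_sdiff, mem_product]
      tauto
    · push Not at hU
      have hcxy := hc x hU.1 y hU.2 h_adj
      rcases lt_or_ge #{z ∈ Uᶜ | c z = c x} R with hR | hR
      · simp [small, hx, hU, hcxy, hcxy ▸ hR]
      · simp [B, hx, hy, hU, hR, hcxy ▸ hR]
  have h_small : #small ≤ #X * R := by
    refine card_le_mul_card_image_of_maps_to (f := Prod.fst) (fun p hp ↦ by simp_all [small]) R ?_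
      |>.trans_eq (mul_comm ..)
    intro x hx
    by_cases hR : #{z ∈ Uᶜ | c z = c x} < R
    · refine (card_le_card_of_injOn Prod.snd (t := {z ∈ Uᶜ | c z = c x}) ?_ ?_).trans hR.le
      · rintro ⟨x', y⟩ h
        simp_all [small]
      · rintro ⟨_, y⟩ h ⟨_, y'⟩ h' rfl
        simp_all
    · rw [filter_eq_empty_iff.2, card_empty]
      · exact R.zero_le
      · rintro ⟨x', y⟩ h rfl
        simp_all [small]
  have h_sdiff := card_sdiff_add_card_eq_card
    (product_subset_product (sdiff_subset (s := X) (t := U)) (sdiff_subset (s := Y) (t := U)))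
  have := (card_le_card h_cover).trans
    ((card_union_le _ _).trans (Nat.add_le_add_right (card_union_le ..) _))
  simp only [card_product] at *
  omega

lemma density_le_of_ordered {a₁ b₁ a₂ b₂ m : ℝ} (ha₁ : 0 ≤ a₁) (hb₁ : 0 ≤ b₁) (ha₂ : 0 ≤ a₂)
    (hb₂ : 0 ≤ b₂) (h_sum : (a₁ + b₁ / 2) + (a₂ + b₂ / 2) + m ≤ 1)
    (h₁₂ : a₁ + b₁ / 2 ≤ a₂ + b₂ / 2) (h₂ : a₂ + b₂ / 2 ≤ m) :
    a₁ + a₂ - a₁ * a₂ + b₁ * b₂ ≤ 5 / 9 := by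
  obtain ⟨u, rfl⟩ : ∃ u, b₁ = 2 * (u - a₁) := ⟨a₁ + b₁ / 2, by ring⟩
  obtain ⟨v, rfl⟩ : ∃ v, b₂ = 2 * (v - a₂) := ⟨a₂ + b₂ / 2, by ring⟩
  have u_nonneg : 0 ≤ u := by linarith
  have : u ≤ 1 / 3 := by linarith
  have v_le : v ≤ (1 - u) / 2 := by linarith
  have ha₁u : a₁ ≤ u := by linarith
  have ha₂v : a₂ ≤ v := by linarith
  -- The left-hand side is affine in `a₁`, so it is bounded by its values at `a₁ = u` and `a₁ = 0`.
  by_cases h_slope : 0 ≤ 1 - a₂ - 4 * (v - a₂)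
  · have := mul_le_mul_of_nonneg_right ha₁u h_slope
    have := mul_le_mul_of_nonneg_left ha₂v (show 0 ≤ 1 - u by linarith)
    have := mul_le_mul_of_nonneg_left v_le (show 0 ≤ 1 - u by linarith)
    nlinarith
  · have : a₁ * (1 - a₂ - 4 * (v - a₂)) ≤ 0 := by nlinarith
    have : u * v ≤ u * ((1 - u) / 2) := mul_le_mul_of_nonneg_left v_le u_nonneg
    have : u * v ≤ 1 / 9 := by nlinarith
    by_cases 4 * u ≤ 1 <;> nlinarith

-- Equality holds at `a₁ = a₂ = m = 1 / 3`, `b₁ = b₂ = 0`: the origin of the constant `5 / 9`.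
lemma density_le_of_le_max {a₁ b₁ a₂ b₂ m : ℝ} (ha₁ : 0 ≤ a₁) (hb₁ : 0 ≤ b₁) (ha₂ : 0 ≤ a₂)
    (hb₂ : 0 ≤ b₂) (h_sum : (a₁ + b₁ / 2) + (a₂ + b₂ / 2) + m ≤ 1)
    (h₁ : a₁ + b₁ / 2 ≤ m) (h₂ : a₂ + b₂ / 2 ≤ m) :
    a₁ + a₂ - a₁ * a₂ + b₁ * b₂ ≤ 5 / 9 := by
  rcases le_total (a₁ + b₁ / 2) (a₂ + b₂ / 2) with h | h
  · exact density_le_of_ordered ha₁ hb₁ ha₂ hb₂ h_sum h h₂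
  · linarith [density_le_of_ordered ha₂ hb₂ ha₁ hb₁ (by linarith) h h₁]

lemma exists_third : ∀ i j : Fin 3, i ≠ j → ∃ k, k ≠ i ∧ k ≠ j ∧ ∀ c, c = i ∨ c = j ∨ c = k := by
  decide

lemma exists_pair_density_le (a b : Fin 3 → ℝ) (ha : ∀ i, 0 ≤ a i) (hb : ∀ i, 0 ≤ b i)
    (h_sum : ∑ i, (a i + b i / 2) ≤ 1) :
    ∃ i j, i ≠ j ∧ a i + a j - a i * a j + b i * b j ≤ 5 / 9 := by
  obtain ⟨k, h_max⟩ := Finite.exists_max fun i ↦ a i + b i / 2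
  rw [Fin.sum_univ_succAbove _ k, Fin.sum_univ_two] at h_sum
  exact ⟨k.succAbove 0, k.succAbove 1, Fin.succAbove_right_injective.ne (by decide),
    density_le_of_le_max (ha _) (hb _) (ha _) (hb _) (by linarith) (h_max _) (h_max _)⟩

lemma exists_pair_density_le_add (a b : Fin 3 → ℝ) {η : ℝ} (hη₀ : 0 ≤ η) (hη₁ : η ≤ 1)
    (ha : ∀ i, 0 ≤ a i) (hb : ∀ i, 0 ≤ b i) (h_sum : ∑ i, (a i + b i / 2) ≤ 1 + η) :
    ∃ i j, i ≠ j ∧ a i + a j - a i * a j + b i * b j ≤ 5 / 9 + 2 * η := by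
  obtain ⟨a, rfl⟩ : ∃ a', a = (1 + η) • a' := ⟨(1 + η)⁻¹ • a, by rw [smul_inv_smul₀]; positivity⟩
  obtain ⟨b, rfl⟩ : ∃ b', b = (1 + η) • b' := ⟨(1 + η)⁻¹ • b, by rw [smul_inv_smul₀]; positivity⟩
  have t_pos : 0 < 1 + η := by positivity
  simp only [Pi.smul_apply, smul_eq_mul, mul_nonneg_iff_of_pos_left t_pos] at *
  have h_scaled : (1 + η) * ∑ i, (a i + b i / 2) ≤ (1 + η) * 1 := by
    rw [mul_sum, mul_one]
    exact (sum_congr rfl fun i _ ↦ by ring).trans_le h_sum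
  obtain ⟨i, j, hij, h⟩ := exists_pair_density_le a b ha hb (le_of_mul_le_mul_left h_scaled t_pos)
  have := mul_le_mul_of_nonneg_left h (sq_nonneg (1 + η))
  have : 0 ≤ η * (1 + η) * (a i + a j) := by have := ha i; have := ha j; positivity
  exact ⟨i, j, hij, by nlinarith⟩

lemma exists_component_labelling {V : Type*} [Fintype V] [DecidableEq V] (G : SimpleGraph V)
    (U : Finset V) :
    ∃ c : V → Finset V, (∀ x ∉ U, ∀ y ∉ U, G.Adj x y → c x = c y) ∧
      ((⊤ : G.Subgraph).deleteVerts U).coe.oddComponents.ncard ≤ #(Uᶜ.image c) := by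
  classical
  set K := ((⊤ : G.Subgraph).deleteVerts U).coe
  have mem_verts {x : V} (hx : x ∉ U) : x ∈ ((⊤ : G.Subgraph).deleteVerts U).verts := ⟨trivial, hx⟩
  let supp (C : K.ConnectedComponent) : Finset V := (Subtype.val '' C.supp).toFinset
  have supp_injective : Injective supp := fun C D h ↦
    SimpleGraph.ConnectedComponent.supp_injective
      (Subtype.val_injective.image_injective (Set.toFinset_inj.1 h))
  refine ⟨fun x ↦ if hx : x ∉ U then supp (K.connectedComponentMk ⟨x, mem_verts hx⟩) else ∅,
    fun x hx y hy h_adj ↦ ?_, ?_⟩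
  · have : K.Adj ⟨x, mem_verts hx⟩ ⟨y, mem_verts hy⟩ := by simp [K, hx, hy, h_adj]
    simp [hx, hy, SimpleGraph.ConnectedComponent.sound this.reachable]
  · rw [← Set.ncard_coe_finset]
    refine Set.ncard_le_ncard_of_injOn supp (fun C _ ↦ ?_) supp_injective.injOn
    induction C using SimpleGraph.ConnectedComponent.ind with | _ x
    have hx : x.1 ∉ U := x.2.2
    simp only [coe_image, Set.mem_image, mem_coe, mem_compl]
    exact ⟨x, hx, by simp [hx]⟩

lemma two_mul_card_add_card_large_le {V β : Type*} [Fintype V] [DecidableEq V] [DecidableEq β]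
    {R : ℕ} (hR : 0 < R) (h_card : Fintype.card V = 3 * R ^ 2) (U : Finset V) (c : V → β)
    (h : #U + R ^ 2 ≤ #(Uᶜ.image c) + 1) :
    2 * #U + #{x ∈ Uᶜ | R ≤ #{y ∈ Uᶜ | c y = c x}} ≤ 2 * R ^ 2 + 3 * R + 1 := by
  have h_image := mul_card_image_le_add Uᶜ c R
  have h_split := card_filter_add_card_filter_not (s := Uᶜ) fun x ↦ #{y ∈ Uᶜ | c y = c x} < R
  simp only [not_lt] at h_split
  have h_compl := card_compl_add_card U
  set S := #{x ∈ Uᶜ | #{y ∈ Uᶜ | c y = c x} < R}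
  set B := #{x ∈ Uᶜ | R ≤ #{y ∈ Uᶜ | c y = c x}}
  have : S + B + #U = 3 * R ^ 2 := by omega
  have : B ≤ 3 * R ^ 2 := by omega
  refine le_of_mul_le_mul_left ?_ hR
  nlinarith [Nat.mul_le_mul_left R h]

lemma oddComponents_le_of_density {V : Type*} [Fintype V] (G : SimpleGraph V)
    [DecidableRel G.Adj] (part : V → Fin 3) {R : ℕ} (hR : 2 ≤ R)
    (h_part : ∀ i, #{x | part x = i} = R ^ 2)
    (h_dense : ∀ i j, i ≠ j → (5 / 9 + 6 / R : ℝ) * R ^ 4 ≤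
      #(G.interedges {x | part x = i} {x | part x = j})) (U : Finset V) :
    ((⊤ : G.Subgraph).deleteVerts U).coe.oddComponents.ncard + 2 ≤ #U + R ^ 2 := by
  classical
  by_contra! violator
  obtain ⟨c, hc, h_comp⟩ := exists_component_labelling G U
  have sum_card_class (S : Finset V) : ∑ i, #{x ∈ S | part x = i} = #S :=
    (card_eq_sum_card_fiberwise (by simp)).symm
  have h_card : Fintype.card V = 3 * R ^ 2 := by
    rw [← card_univ, ← sum_card_class univ]
    simp [h_part]
  have h_sum := two_mul_card_add_card_large_le (by omega) h_card U c (by omega)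
  have h_edges (i j) := card_interedges_add_le G U {x | part x = i} {x | part x = j} c R hc
  set B : Finset V := {x ∈ Uᶜ | R ≤ #{y ∈ Uᶜ | c y = c x}}
  have h_diff (i) : (#(({x | part x = i} : Finset V) \ U) : ℝ) = R ^ 2 - #{x ∈ U | part x = i} := by
    have := card_inter_add_card_sdiff {x | part x = i} U
    rw [filter_inter, univ_inter, h_part] at this
    rw [eq_sub_iff_add_eq']
    exact_mod_cast this
  obtain ⟨i, j, hij, h_le⟩ := exists_pair_density_le_add
    (fun i ↦ #{x ∈ U | part x = i} / (R : ℝ) ^ 2) (fun i ↦ #{x ∈ B | part x = i} / (R : ℝ) ^ 2)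
    (η := (3 * R + 1) / (2 * R ^ 2)) (by positivity)
    (by rw [div_le_one (by positivity)]; norm_cast; nlinarith)
    (fun i ↦ by positivity) (fun i ↦ by positivity) (by
      rw [sum_add_distrib, ← sum_div, ← sum_div, ← sum_div]
      simp only [← Nat.cast_sum, sum_card_class]
      have : (2 * #U + #B : ℝ) ≤ 2 * R ^ 2 + 3 * R + 1 := by exact_mod_cast h_sum
      field_simp
      linarith)
  have h_edges : (#(G.interedges {x | part x = i} {x | part x = j}) : ℝ)
      + (R ^ 2 - #{x ∈ U | part x = i}) * (R ^ 2 - #{x ∈ U | part x = j}) ≤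
      R ^ 2 * R ^ 2 + R ^ 2 * R + #{x ∈ B | part x = i} * #{x ∈ B | part x = j} := by
    have := h_edges i j
    simp only [h_part, filter_inter, univ_inter] at this
    rw [← h_diff, ← h_diff]
    exact_mod_cast this
  have := h_dense i j hij
  have hR' : (2 : ℝ) ≤ R := by exact_mod_cast hR
  field_simp at this h_le
  nlinarith

lemma exists_isMatching_of_density {V : Type*} [Fintype V] (G : SimpleGraph V)
    [DecidableRel G.Adj] (part : V → Fin 3) {R : ℕ} (hR : 2 ≤ R)
    (h_part : ∀ i, #{x | part x = i} = R ^ 2)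
    (h_dense : ∀ i j, i ≠ j → (5 / 9 + 6 / R : ℝ) * R ^ 4 ≤
      #(G.interedges {x | part x = i} {x | part x = j})) :
    ∃ M : G.Subgraph, M.IsMatching ∧ 2 * R ^ 2 + 2 ≤ M.verts.ncard := by
  have hR₄ : 4 ≤ R ^ 2 := by nlinarith
  have h_card : Nat.card V = 3 * R ^ 2 := by
    rw [Nat.card_eq_fintype_card, ← card_univ,
      card_eq_sum_card_fiberwise (f := part) (t := univ) (by simp)]
    simp [h_part]
  obtain ⟨M, hM, hM_card⟩ : ∃ M : G.Subgraph, M.IsMatching ∧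
      Nat.card V ≤ M.verts.ncard + (R ^ 2 - 2) := by
    refine exists_isMatching_of_oddComponents_le ⟨2 * R ^ 2 - 1, by omega⟩ fun U ↦ ?_
    lift U to Finset V using U.toFinite
    have := oddComponents_le_of_density G part hR h_part h_dense U
    rw [Set.ncard_coe_finset]
    omega
  exact ⟨M, hM, by omega⟩

end Density

section PartiteMatching

variable {ι α : Type*}

/-- A matching in an `ι`-partite hypergraph all of whose classes are copies of `α`: a family of
edges, encoded as functions `ι → α`, no two of which share a vertex. -/
def IsPartiteMatching (M : Finset (ι → α)) : Prop :=
  ∀ e ∈ M, ∀ f ∈ M, e ≠ f → ∀ i, e i ≠ f i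

namespace IsPartiteMatching

variable {M M' : Finset (ι → α)}

lemma injOn (hM : IsPartiteMatching M) (i : ι) : Set.InjOn (fun e : ι → α ↦ e i) M :=
  fun e he f hf h ↦ by_contra fun h_ne ↦ hM e he f hf h_ne i h

lemma card_image [DecidableEq α] (hM : IsPartiteMatching M) (i : ι) :
    #(M.image fun e ↦ e i) = #M :=
  card_image_of_injOn (hM.injOn i)

lemma mono (hM : IsPartiteMatching M) (h : M' ⊆ M) : IsPartiteMatching M' :=
  fun e he f hf ↦ hM e (h he) f (h hf)

lemma union [DecidableEq (ι → α)] (hM : IsPartiteMatching M) (hM' : IsPartiteMatching M')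
    (h : ∀ e ∈ M, ∀ f ∈ M', ∀ i, e i ≠ f i) : IsPartiteMatching (M ∪ M') := by
  intro e he f hf hef
  rcases mem_union.1 he with he | he <;> rcases mem_union.1 hf with hf | hf
  · exact hM e he f hf hef
  · exact h e he f hf
  · exact fun i ↦ (h f hf e he i).symm
  · exact hM' e he f hf hef

lemma exists_lines [Nonempty ι] [Finite α] (hM : IsPartiteMatching M) :
    ∃ line : α → ι → α, (∀ i, Bijective fun a ↦ line a i) ∧ ∀ e ∈ M, ∃ a, line a = e := by
  classical
  have := Fintype.ofFinite α
  obtain ⟨i₀⟩ := ‹Nonempty ι›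
  have exists_edge (a : α) : ∃ f : ι → α, ∀ e ∈ M, e i₀ = a → f = e := by
    by_cases h : ∃ f ∈ M, f i₀ = a
    · obtain ⟨f, hf, rfl⟩ := h
      exact ⟨f, fun e he h ↦ hM.injOn i₀ hf he h.symm⟩
    · exact ⟨fun _ ↦ a, fun e he hea ↦ (h ⟨e, he, hea⟩).elim⟩
  choose edge h_edge using exists_edge
  have exists_perm (i : ι) : ∃ g : α ≃ (univ : Finset α), ∀ a ∈ M.image (fun e ↦ e i₀),
      (g a : α) = edge a i := by
    refine exists_equiv_extend_of_card_eq card_univ.symm (subset_univ _) ?_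
    simp only [coe_image]
    rintro _ ⟨e, he, rfl⟩ _ ⟨f, hf, rfl⟩ h
    simp only [h_edge _ e he rfl, h_edge _ f hf rfl] at h
    rw [hM.injOn i he hf h]
  choose g hg using exists_perm
  refine ⟨fun a i ↦ g i a, fun i ↦ ?_, fun e he ↦ ⟨e i₀, funext fun i ↦ ?_⟩⟩
  · exact ((g i).trans (Equiv.subtypeUnivEquiv mem_univ)).bijective
  · change (g i (e i₀) : α) = e i
    rw [hg i _ (mem_image_of_mem _ he), h_edge _ e he rfl]

end IsPartiteMatching

end PartiteMatching

section Augmentation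

lemma exists_pairs_of_isMatching {V β : Type*} [Finite V] [DecidableEq V] [LinearOrder β]
    {G : SimpleGraph V} {part : V → β} (h_part : ∀ x y, G.Adj x y → part x ≠ part y)
    {M : G.Subgraph} (hM : M.IsMatching) :
    ∃ N : Finset (V × V), (∀ p ∈ N, G.Adj p.1 p.2) ∧
      (N : Set (V × V)).PairwiseDisjoint (fun p ↦ ({p.1, p.2} : Finset V)) ∧
      M.verts.ncard ≤ 2 * #N := by
  classical
  have := Fintype.ofFinite V
  let N : Finset (V × V) := {p | M.Adj p.1 p.2 ∧ part p.1 < part p.2}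
  refine ⟨N, fun p hp ↦ (mem_filter.1 hp).2.1.adj_sub, ?_, ?_⟩
  · rintro ⟨x, y⟩ hxy ⟨x', y'⟩ hxy' h_ne
    obtain ⟨h_adj, h_lt⟩ : M.Adj x y ∧ part x < part y := by simpa [N] using hxy
    obtain ⟨h_adj', h_lt'⟩ : M.Adj x' y' ∧ part x' < part y' := by simpa [N] using hxy'
    simp only [Function.onFun, disjoint_insert_left, disjoint_singleton_left, mem_insert,
      mem_singleton, not_or]
    refine ⟨⟨?_, ?_⟩, ?_, ?_⟩ <;> rintro rfl
    · exact h_ne (by rw [hM.eq_of_adj_left h_adj h_adj'])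
    · rw [hM.eq_of_adj_left h_adj h_adj'.symm] at h_lt
      exact h_lt.asymm h_lt'
    · rw [hM.eq_of_adj_left h_adj' h_adj.symm] at h_lt'
      exact h_lt.asymm h_lt'
    · exact h_ne (by rw [hM.eq_of_adj_right h_adj h_adj'])
  · have : M.verts ⊆ ↑(N.image Prod.fst ∪ N.image Prod.snd) := by
      intro x hx
      obtain ⟨y, hxy, -⟩ := hM hx
      rcases (h_part x y hxy.adj_sub).lt_or_gt with h | h
      · simp only [coe_union, coe_image]
        exact .inl ⟨(x, y), by simp [N, hxy, h], rfl⟩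
      · simp only [coe_union, coe_image]
        exact .inr ⟨(y, x), by simp [N, hxy.symm, h], rfl⟩
    calc M.verts.ncard ≤ #(N.image Prod.fst ∪ N.image Prod.snd) := by
          rw [← Set.ncard_coe_finset]
          exact Set.ncard_le_ncard this
      _ ≤ #N + #N := (card_union_le _ _).trans (add_le_add card_image_le card_image_le)
      _ = 2 * #N := (two_mul _).symm

/-- The edges of `H` containing the vertices `x` and `y` (each given as a class and a point of that
class) and whose vertices in the remaining classes `k` belong to `L k`. -/
def edgesThrough {ι α : Type*} [Fintype ι] [DecidableEq ι] [DecidableEq α] (H : Finset (ι → α))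
    (L : ι → Finset α) (x y : ι × α) : Finset (ι → α) :=
  {e ∈ H | e x.1 = x.2 ∧ e y.1 = y.2 ∧ ∀ k, k ≠ x.1 → k ≠ y.1 → e k ∈ L k}

lemma mem_edgesThrough {ι α : Type*} [Fintype ι] [DecidableEq ι] [DecidableEq α]
    {H : Finset (ι → α)} {L : ι → Finset α} {x y : ι × α} {e : ι → α} :
    e ∈ edgesThrough H L x y ↔
      e ∈ H ∧ e x.1 = x.2 ∧ e y.1 = y.2 ∧ ∀ k, k ≠ x.1 → k ≠ y.1 → e k ∈ L k :=
  mem_filter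

/-- The graph on the vertices of an `ι`-partite hypergraph `H` in which two vertices in different
classes are adjacent if at least `m` edges of `H` contain both and otherwise stay inside `L`. -/
def heavyPairGraph {ι α : Type*} [Fintype ι] [DecidableEq ι] [DecidableEq α] (H : Finset (ι → α))
    (L : ι → Finset α) (m : ℕ) : SimpleGraph (ι × α) where
  Adj x y := x.1 ≠ y.1 ∧ m ≤ #(edgesThrough H L x y)
  symm := ⟨fun x y h ↦ ⟨h.1.symm, by
    convert h.2 using 2
    ext e
    simp only [mem_edgesThrough]
    tauto⟩⟩
  loopless := ⟨fun _ h ↦ h.1 rfl⟩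

instance {ι α : Type*} [Fintype ι] [DecidableEq ι] [DecidableEq α] (H : Finset (ι → α))
    (L : ι → Finset α) (m : ℕ) : DecidableRel (heavyPairGraph H L m).Adj :=
  fun _ _ ↦ inferInstanceAs (Decidable (_ ∧ _))

variable {α : Type*} [DecidableEq α] {H : Finset (Fin 3 → α)}

lemma injOn_edgesThrough {L : Fin 3 → Finset α} {x y : Fin 3 × α} {k : Fin 3}
    (h_univ : ∀ c, c = x.1 ∨ c = y.1 ∨ c = k) :
    Set.InjOn (fun e : Fin 3 → α ↦ e k) (edgesThrough H L x y) := by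
  refine fun e he f hf hef ↦ funext fun c ↦ ?_
  obtain ⟨-, hex, hey, -⟩ := mem_edgesThrough.1 he
  obtain ⟨-, hfx, hfy, -⟩ := mem_edgesThrough.1 hf
  rcases h_univ c with rfl | rfl | rfl
  · exact hex.trans hfx.symm
  · exact hey.trans hfy.symm
  · exact hef

lemma card_edgesThrough_le {L : Fin 3 → Finset α} {x y : Fin 3 × α} {k : Fin 3}
    (hkx : k ≠ x.1) (hky : k ≠ y.1) (h_univ : ∀ c, c = x.1 ∨ c = y.1 ∨ c = k) :
    #(edgesThrough H L x y) ≤ #(L k) :=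
  card_le_card_of_injOn (fun e ↦ e k) (fun _ he ↦ (mem_edgesThrough.1 he).2.2.2 k hkx hky)
    (injOn_edgesThrough h_univ)

lemma card_edgesThrough_le_sdiff_add {L B : Fin 3 → Finset α} {x y : Fin 3 × α} (hxy : x.1 ≠ y.1)
    {r : ℕ} (hB : ∀ k, #(B k) ≤ r) :
    #(edgesThrough H L x y) ≤ #(edgesThrough H (fun k ↦ L k \ B k) x y) + r := by
  obtain ⟨k, hkx, hky, h_univ⟩ := exists_third x.1 y.1 hxy
  have h_cover : edgesThrough H L x y ⊆
      edgesThrough H (fun k ↦ L k \ B k) x y ∪ edgesThrough H B x y := by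
    intro e he
    obtain ⟨heH, hex, hey, heL⟩ := mem_edgesThrough.1 he
    have h_third {c : Fin 3} (hcx : c ≠ x.1) (hcy : c ≠ y.1) : c = k :=
      ((h_univ c).resolve_left hcx).resolve_left hcy
    simp only [mem_union, mem_edgesThrough, mem_sdiff]
    by_cases heB : e k ∈ B k
    · exact .inr ⟨heH, hex, hey, fun c hcx hcy ↦ h_third hcx hcy ▸ heB⟩
    · exact .inl ⟨heH, hex, hey, fun c hcx hcy ↦ ⟨heL c hcx hcy, h_third hcx hcy ▸ heB⟩⟩
  exact (card_le_card h_cover).trans ((card_union_le _ _).trans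
    (Nat.add_le_add_left ((card_edgesThrough_le hkx hky h_univ).trans (hB k)) _))

lemma sum_degree_le_card_heavy [Fintype α] (L : Fin 3 → Finset α) (m : ℕ) {i j k : Fin 3}
    (hij : i ≠ j) (hki : k ≠ i) (hkj : k ≠ j) (h_univ : ∀ c, c = i ∨ c = j ∨ c = k) :
    ∑ z ∈ L k, #{e ∈ H | e k = z} ≤
      #{p : α × α | (heavyPairGraph H L m).Adj (i, p.1) (j, p.2)} * #(L k)
        + m * Fintype.card α ^ 2 := by
  have h_count : ∑ z ∈ L k, #{e ∈ H | e k = z} =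
      ∑ p : α × α, #(edgesThrough H L (i, p.1) (j, p.2)) := by
    simp only [card_filter, edgesThrough]
    rw [sum_comm, sum_comm (s := univ)]
    refine sum_congr rfl fun e _ ↦ ?_
    have h_third : (∀ c, c ≠ i → c ≠ j → e c ∈ L c) ↔ e k ∈ L k :=
      ⟨fun h ↦ h k hki hkj,
        fun h c hci hcj ↦ ((h_univ c).resolve_left hci).resolve_left hcj ▸ h⟩
    simp [h_third, Fintype.sum_prod_type, ite_and]
  have h_le (p : α × α) : #(edgesThrough H L (i, p.1) (j, p.2)) ≤
      (if (heavyPairGraph H L m).Adj (i, p.1) (j, p.2) then #(L k) else 0) + m := by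
    split_ifs with h
    · exact (card_edgesThrough_le hki hkj h_univ).trans (Nat.le_add_right ..)
    · have : ¬ m ≤ #(edgesThrough H L (i, p.1) (j, p.2)) := fun h' ↦ h ⟨hij, h'⟩
      omega
  calc ∑ z ∈ L k, #{e ∈ H | e k = z}
      ≤ ∑ p : α × α, ((if (heavyPairGraph H L m).Adj (i, p.1) (j, p.2) then #(L k) else 0) + m) :=
        h_count.trans_le (sum_le_sum fun p _ ↦ h_le p)
    _ = _ := by
        rw [sum_add_distrib, ← sum_filter]
        simp [sq, mul_comm]

lemma card_heavy_ge [Fintype α] {L : Fin 3 → Finset α} {m R : ℕ} (hR : 0 < R)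
    (hL : ∀ k, R * m ≤ #(L k)) (hm : 0 < m) {δ : ℝ}
    (h_deg : ∀ k, ∀ z ∈ L k, δ * Fintype.card α ^ 2 ≤ #{e ∈ H | e k = z}) {i j : Fin 3}
    (hij : i ≠ j) :
    (δ - 1 / R) * Fintype.card α ^ 2 ≤
      #{p : α × α | (heavyPairGraph H L m).Adj (i, p.1) (j, p.2)} := by
  obtain ⟨k, hki, hkj, h_univ⟩ := exists_third i j hij
  have h_sum : δ * Fintype.card α ^ 2 * #(L k) ≤
      #{p : α × α | (heavyPairGraph H L m).Adj (i, p.1) (j, p.2)} * #(L k)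
        + m * Fintype.card α ^ 2 := by
    calc δ * Fintype.card α ^ 2 * #(L k) ≤ ∑ z ∈ L k, (#{e ∈ H | e k = z} : ℝ) := by
          rw [mul_comm, ← nsmul_eq_mul]
          exact card_nsmul_le_sum _ _ _ (h_deg k)
      _ ≤ _ := by exact_mod_cast sum_degree_le_card_heavy L m hij hki hkj h_univ
  have hL_k : (R * m : ℝ) ≤ #(L k) := by exact_mod_cast hL k
  have hm' : (0 : ℝ) < m := by exact_mod_cast hm
  have hR' : (0 : ℝ) < R := by exact_mod_cast hR
  have hL_pos : (0 : ℝ) < #(L k) := (mul_pos hR' hm').trans_le hL_k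
  refine le_of_mul_le_mul_right ?_ hL_pos
  have h_div : (m : ℝ) ≤ 1 / R * #(L k) := by
    rw [one_div_mul_eq_div, le_div_iff₀' hR']
    exact hL_k
  nlinarith [mul_le_mul_of_nonneg_right h_div (sq_nonneg (Fintype.card α : ℝ))]

lemma exists_injective_choice {κ β : Type*} [Fintype κ] (t : κ → Finset β)
    (ht : ∀ p, Fintype.card κ ≤ #(t p)) : ∃ v : κ → β, Injective v ∧ ∀ p, v p ∈ t p := by
  classical
  refine (all_card_le_biUnion_card_iff_exists_injective t).1 fun s ↦ ?_
  rcases s.eq_empty_or_nonempty with rfl | ⟨p, hp⟩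
  · simp
  · calc #s ≤ #(t p) := (card_le_univ s).trans (ht p)
      _ ≤ #(s.biUnion t) := card_le_card (subset_biUnion_of_mem _ hp)

lemma exists_matching_through_pairs (L : Fin 3 → Finset α) (S : Finset (Fin 3 × α))
    (hS : ∀ v ∈ S, v.2 ∉ L v.1) {N : Finset ((Fin 3 × α) × (Fin 3 × α))}
    (hN : ∀ p ∈ N, p.1 ∈ S ∧ p.2 ∈ S ∧ (heavyPairGraph H L #N).Adj p.1 p.2)
    (hN_disj : (N : Set ((Fin 3 × α) × (Fin 3 × α))).PairwiseDisjoint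
      fun p ↦ ({p.1, p.2} : Finset (Fin 3 × α))) :
    ∃ M ⊆ H, IsPartiteMatching M ∧ #M = #N ∧ ∀ e ∈ M, ∀ c, (c, e c) ∈ S ∨ e c ∈ L c := by
  have exists_third' (p : N) : ∃ k, k ≠ p.1.1.1 ∧ k ≠ p.1.2.1 ∧
      ∀ c, c = p.1.1.1 ∨ c = p.1.2.1 ∨ c = k := exists_third _ _ (hN p p.2).2.2.1
  choose k hk₁ hk₂ h_univ using exists_third'
  let apex (p : N) (e : Fin 3 → α) : Fin 3 × α := (k p, e (k p))
  let candidates (p : N) : Finset (Fin 3 × α) := (edgesThrough H L p.1.1 p.1.2).image (apex p)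
  have card_candidates (p : N) : #N ≤ #(candidates p) :=
    (hN p p.2).2.2.2.trans_eq (card_image_of_injOn fun e he f hf hef ↦
      injOn_edgesThrough (h_univ p) he hf (congrArg Prod.snd hef)).symm
  obtain ⟨v, v_injective, hv⟩ := exists_injective_choice candidates (by simpa using card_candidates)
  simp only [candidates, mem_image, apex] at hv
  choose E hE hEv using hv
  have vertex_cases (p : N) (c : Fin 3) :
      (c, E p c) ∈ ({p.1.1, p.1.2} : Finset (Fin 3 × α)) ∧ (c, E p c) ∈ S ∨
        (c, E p c) = v p ∧ E p c ∈ L c := by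
    obtain ⟨-, h₁, h₂, h₃⟩ := mem_edgesThrough.1 (hE p)
    obtain ⟨hS₁, hS₂, -⟩ := hN p p.2
    rcases h_univ p c with rfl | rfl | rfl
    · simp [h₁, hS₁]
    · simp [h₂, hS₂]
    · exact .inr ⟨hEv p, h₃ _ (hk₁ p) (hk₂ p)⟩
  have vertex_ne {p q : N} (hpq : p ≠ q) (c : Fin 3) : E p c ≠ E q c := by
    intro h
    have hp := vertex_cases p c
    rw [h] at hp
    rcases hp with ⟨hp, hpS⟩ | ⟨hp, hpL⟩ <;> rcases vertex_cases q c with ⟨hq, hqS⟩ | ⟨hq, hqL⟩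
    · exact disjoint_left.1 (hN_disj p.2 q.2 (Subtype.coe_injective.ne hpq)) hp hq
    · exact hS _ hpS hqL
    · exact hS _ hqS hpL
    · exact hpq (v_injective (hp.symm.trans hq))
  refine ⟨univ.image E, ?_, ?_, ?_, ?_⟩
  · exact image_subset_iff.2 fun p _ ↦ (mem_edgesThrough.1 (hE p)).1
  · simp only [IsPartiteMatching, forall_mem_image]
    exact fun p _ q _ hpq ↦ vertex_ne fun h ↦ hpq (h ▸ rfl)
  · rw [card_image_of_injective _ fun p q hpq ↦ ?_, card_univ, Fintype.card_coe]
    by_contra h_ne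
    exact vertex_ne h_ne 0 (congrFun hpq 0)
  · simp only [forall_mem_image]
    exact fun p _ c ↦ (vertex_cases p c).imp And.right And.right

omit [DecidableEq α] in
lemma exists_dense_sample [Fintype α] (G : SimpleGraph (Fin 3 × α)) [DecidableRel G.Adj]
    {R : ℕ} (hR : 2 ≤ R) (h_card : 2 * R ^ 4 < Fintype.card α) {line : α → Fin 3 → α}
    (h_line : ∀ i, Bijective fun a ↦ line a i)
    (h_dense : ∀ i j, i ≠ j → (5 / 9 + 16 / R : ℝ) * Fintype.card α ^ 2 ≤
      #{p : α × α | G.Adj (i, p.1) (j, p.2)}) :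
    ∃ f : Fin (R ^ 2) → α, Injective f ∧ ∀ i j, i ≠ j → (5 / 9 + 6 / R : ℝ) * R ^ 4 ≤
      #{p : Fin (R ^ 2) × Fin (R ^ 2) | G.Adj (i, line (f p.1) i) (j, line (f p.2) j)} := by
  let w (k : Fin 3 × Fin 3) (x y : α) : ℝ :=
    if G.Adj (k.1, line x k.1) (k.2, line y k.2) then 1 else 0
  have : NeZero (R ^ 2) := ⟨by positivity⟩
  obtain ⟨f, hf, h_dev⟩ := exists_injective_sample (ι := Fin (R ^ 2)) w
    (fun k x y ↦ by dsimp only [w]; split_ifs <;> simp) (by simpa [← pow_mul] using h_card)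
  refine ⟨f, hf, fun i j hij ↦ ?_⟩
  have h_total : ∑ x, ∑ y, w (i, j) x y = #{p : α × α | G.Adj (i, p.1) (j, p.2)} := by
    rw [← sum_boole, Fintype.sum_prod_type]
    exact (sum_congr rfl fun x _ ↦ (h_line j).sum_comp
      fun y ↦ if G.Adj (i, line x i) (j, y) then (1 : ℝ) else 0).trans
      ((h_line i).sum_comp fun x ↦ ∑ y, if G.Adj (i, x) (j, y) then (1 : ℝ) else 0)
  have h_sample : ∑ a, ∑ b, w (i, j) (f a) (f b) =
      #{p : Fin (R ^ 2) × Fin (R ^ 2) | G.Adj (i, line (f p.1) i) (j, line (f p.2) j)} := by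
    rw [← sum_boole, Fintype.sum_prod_type]
  have h_mean : (5 / 9 + 16 / R : ℝ) ≤ (∑ x, ∑ y, w (i, j) x y) / Fintype.card α ^ 2 := by
    have : (0 : ℝ) < Fintype.card α := by exact_mod_cast (Nat.zero_le _).trans_lt h_card
    rw [le_div_iff₀ (by positivity), h_total]
    exact h_dense i j hij
  have h_abs := abs_le_of_sq_le_sq' ((h_dev (i, j)).trans (?_ : _ ≤ (10 * (R : ℝ) ^ 3) ^ 2))
    (by positivity)
  · rw [← h_sample]
    have h_scaled := mul_le_mul_of_nonneg_left h_mean (show (0 : ℝ) ≤ R ^ 4 by positivity)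
    have h_expand : (5 / 9 + 6 / R : ℝ) * R ^ 4 = R ^ 4 * (5 / 9 + 16 / R) - 10 * R ^ 3 := by
      have : (R : ℝ) ≠ 0 := by positivity
      field_simp
      ring
    have h_sq : ((Fintype.card (Fin (R ^ 2)) : ℝ)) ^ 2 = R ^ 4 := by
      simp [← pow_mul]
    rw [h_sq] at h_abs
    linarith [h_abs.1]
  · simp only [Fintype.card_prod, Fintype.card_fin, Nat.cast_pow, Nat.cast_mul]
    push_cast
    nlinarith [show (0 : ℝ) ≤ R ^ 6 by positivity]

lemma exists_pairs_in_sample [Fintype α] (G : SimpleGraph (Fin 3 × α)) [DecidableRel G.Adj]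
    (hG : ∀ x y, G.Adj x y → x.1 ≠ y.1) {R : ℕ} (hR : 2 ≤ R)
    (h_card : 2 * R ^ 4 < Fintype.card α) {line : α → Fin 3 → α}
    (h_line : ∀ i, Bijective fun a ↦ line a i)
    (h_dense : ∀ i j, i ≠ j → (5 / 9 + 16 / R : ℝ) * Fintype.card α ^ 2 ≤
      #{p : α × α | G.Adj (i, p.1) (j, p.2)}) :
    ∃ A : Finset α, #A = R ^ 2 ∧ ∃ N : Finset ((Fin 3 × α) × (Fin 3 × α)), #N = R ^ 2 + 1 ∧
      (∀ p ∈ N, p.1.2 ∈ A.image (fun a ↦ line a p.1.1) ∧ p.2.2 ∈ A.image (fun a ↦ line a p.2.1) ∧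
        G.Adj p.1 p.2) ∧
      (N : Set ((Fin 3 × α) × (Fin 3 × α))).PairwiseDisjoint
        (fun p ↦ ({p.1, p.2} : Finset (Fin 3 × α))) := by
  obtain ⟨f, hf, h_sample⟩ := exists_dense_sample G hR h_card h_line h_dense
  let φ : Fin 3 × Fin (R ^ 2) ↪ Fin 3 × α := ⟨fun x ↦ (x.1, line (f x.2) x.1), by
    rintro ⟨i, a⟩ ⟨j, b⟩ h
    obtain rfl : i = j := congrArg Prod.fst h
    exact congrArg _ (hf ((h_line i).injective (congrArg Prod.snd h)))⟩
  have φ_apply (x) : φ x = (x.1, line (f x.2) x.1) := rfl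
  have card_class (i : Fin 3) : #{x : Fin 3 × Fin (R ^ 2) | x.1 = i} = R ^ 2 := by
    rw [show ({x : Fin 3 × Fin (R ^ 2) | x.1 = i} : Finset _) = {i} ×ˢ univ by
      ext
      simp [eq_comm, Prod.ext_iff], card_product]
    simp
  have h_interedges {i j : Fin 3} (hij : i ≠ j) : (5 / 9 + 6 / R : ℝ) * R ^ 4 ≤
      #((G.comap φ).interedges {x | x.1 = i} {x | x.1 = j}) := by
    refine (h_sample i j hij).trans (Nat.cast_le.2 ?_)
    exact card_le_card_of_injOn (fun p ↦ ((i, p.1), (j, p.2)))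
      (fun p hp ↦ by simpa [φ_apply, SimpleGraph.mem_interedges_iff] using hp)
      (fun p _ q _ h ↦ by simpa [Prod.ext_iff] using h)
  obtain ⟨M, hM, hM_card⟩ :=
    exists_isMatching_of_density (G.comap φ) Prod.fst hR card_class fun _ _ ↦ h_interedges
  obtain ⟨N', hN'_adj, hN'_disj, hN'_card⟩ :=
    exists_pairs_of_isMatching (G := G.comap φ) (part := Prod.fst) (fun x y hxy ↦ hG _ _ hxy) hM
  obtain ⟨N, hN, hN_card⟩ := exists_subset_card_eq (show R ^ 2 + 1 ≤ #N' by omega)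
  refine ⟨univ.map ⟨f, hf⟩, by simp, N.map (φ.prodMap φ), by simpa using hN_card, ?_, ?_⟩
  · simp only [forall_mem_map]
    intro p hp
    exact ⟨mem_image.2 ⟨f p.1.2, by simp, rfl⟩, mem_image.2 ⟨f p.2.2, by simp, rfl⟩,
      hN'_adj p (hN hp)⟩
  · rw [coe_map]
    rintro _ ⟨p, hp, rfl⟩ _ ⟨q, hq, rfl⟩ h_ne
    have := (disjoint_map φ).2 (hN'_disj (hN hp) (hN hq) (ne_of_apply_ne _ h_ne))
    simp only [map_insert, map_singleton] at this
    exact this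

lemma exists_larger_matching [Fintype α] {M : Finset (Fin 3 → α)} (hMH : M ⊆ H)
    (hM : IsPartiteMatching M) {L : Fin 3 → Finset α} (hML : ∀ e ∈ M, ∀ c, e c ∉ L c)
    {R : ℕ} (hR : 2 ≤ R) (h_card : 2 * R ^ 4 < Fintype.card α) (hL : ∀ k, 4 * R ^ 3 ≤ #(L k))
    (h_deg : ∀ k, ∀ z ∈ L k,
      (5 / 9 + 17 / R : ℝ) * Fintype.card α ^ 2 ≤ #{e ∈ H | e k = z}) :
    ∃ M' ⊆ H, IsPartiteMatching M' ∧ #M < #M' := by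
  obtain ⟨line, h_line, hM_line⟩ := hM.exists_lines
  have h_dense (i j : Fin 3) (hij : i ≠ j) : (5 / 9 + 16 / R : ℝ) * Fintype.card α ^ 2 ≤
      #{p : α × α | (heavyPairGraph H L (4 * R ^ 2)).Adj (i, p.1) (j, p.2)} := by
    have h_split : (5 / 9 + 16 / R : ℝ) = 5 / 9 + 17 / R - 1 / R := by ring
    rw [h_split]
    refine card_heavy_ge (by omega) (fun k ↦ ?_) (by positivity) h_deg hij
    exact (show R * (4 * R ^ 2) = 4 * R ^ 3 by ring).trans_le (hL k)
  obtain ⟨A, hA, N, hN_card, hN, hN_disj⟩ :=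
    exists_pairs_in_sample (heavyPairGraph H L (4 * R ^ 2)) (fun _ _ h ↦ h.1) hR h_card h_line
      h_dense
  let sampled (c : Fin 3) : Finset α := A.image fun a ↦ line a c
  have card_sampled (c) : #(sampled c) ≤ R ^ 2 := hA ▸ card_image_le
  have h_heavy {p} (hp : p ∈ N) :
      (heavyPairGraph H (fun c ↦ L c \ sampled c) #N).Adj p.1 p.2 := by
    obtain ⟨-, -, h_ne, h_many⟩ := hN p hp
    have := card_edgesThrough_le_sdiff_add (H := H) (L := L) h_ne card_sampled
    have : 0 < R ^ 2 := by positivity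
    exact ⟨h_ne, by omega⟩
  obtain ⟨M₁, hM₁H, hM₁, hM₁_card, h_vertex⟩ := exists_matching_through_pairs
    (fun c ↦ L c \ sampled c) {v | v.2 ∈ sampled v.1}
    (fun v hv h ↦ (mem_sdiff.1 h).2 (mem_filter.1 hv).2)
    (fun p hp ↦ ⟨mem_filter.2 ⟨mem_univ _, (hN p hp).1⟩, mem_filter.2 ⟨mem_univ _, (hN p hp).2.1⟩,
      h_heavy hp⟩) hN_disj
  have h_disj : ∀ e ∈ M \ A.image line, ∀ f ∈ M₁, ∀ i, e i ≠ f i := by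
    intro e he f hf i hef
    obtain ⟨heM, heA⟩ := mem_sdiff.1 he
    rcases h_vertex f hf i with hfi | hfi
    · obtain ⟨b, rfl⟩ := hM_line e heM
      obtain ⟨a, ha, haf⟩ := mem_image.1 (mem_filter.1 hfi).2
      obtain rfl : a = b := (h_line i).injective (haf.trans hef.symm)
      exact heA (mem_image_of_mem _ ha)
    · exact hML e heM i (hef ▸ (mem_sdiff.1 hfi).1)
  refine ⟨(M \ A.image line) ∪ M₁, union_subset (sdiff_subset.trans hMH) hM₁H,
    (hM.mono sdiff_subset).union hM₁ h_disj, ?_⟩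
  rw [card_union_of_disjoint (disjoint_left.2 fun e he he' ↦ h_disj e he e he' 0 rfl)]
  have h_image : #(A.image line) ≤ R ^ 2 := hA ▸ card_image_le
  have h_sdiff := le_card_sdiff (A.image line) M
  omega

theorem exists_almost_perfect_matching [Fintype α] {W : Fin 3 → Finset α} {w R : ℕ}
    (hW : ∀ k, #(W k) ≤ w) (hR : 2 ≤ R) (h_card : 2 * R ^ 4 < Fintype.card α)
    (h_deg : ∀ k, ∀ z ∉ W k,
      (5 / 9 + 17 / R : ℝ) * Fintype.card α ^ 2 ≤ #{e ∈ H | e k = z}) :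
    ∃ M ⊆ H, IsPartiteMatching M ∧ Fintype.card α < #M + w + 4 * R ^ 3 := by
  classical
  obtain ⟨M, hM, hM_max⟩ := exists_max_image {M ∈ H.powerset | IsPartiteMatching M} card
    ⟨∅, mem_filter.2 ⟨empty_mem_powerset H, fun e he ↦ absurd he (notMem_empty e)⟩⟩
  obtain ⟨hMH, hM⟩ : M ⊆ H ∧ IsPartiteMatching M := by simpa using hM
  refine ⟨M, hMH, hM, ?_⟩
  by_contra! h_small
  obtain ⟨M', hM'H, hM', h_lt⟩ := exists_larger_matching hMH hM
    (L := fun k ↦ (W k ∪ M.image fun e ↦ e k)ᶜ) (fun e he c ↦ by simp; tauto) hR h_card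
    (fun k ↦ by
      have := card_union_le (W k) (M.image fun e ↦ e k)
      rw [hM.card_image] at this
      have := hW k
      rw [card_compl]
      omega)
    (fun k z hz ↦ h_deg k z fun h ↦ mem_compl.1 hz (mem_union_left _ h))
  exact h_lt.not_ge (hM_max M' (by simp [hM'H, hM']))

end Augmentation

section GreedyFamily

variable {τ T : Type*} [Fintype τ] [Fintype T] {absorbs : T → τ → Prop}
  [∀ t, DecidablePred (absorbs t)] {conf : τ → τ → Prop} [DecidableRel conf] {p q : ℝ}

lemma exists_notMem_mul_sum_le_sum_filter [Nonempty T] (hp : 0 < p)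
    (h_abs : ∀ t, p * Fintype.card τ ≤ #{A | absorbs t A}) {bad : Finset τ}
    (h_bad : #bad ≤ p * Fintype.card τ / 2) [Nonempty τ] {w : T → ℝ} (hw : ∀ t, 0 ≤ w t) :
    ∃ A ∉ bad, p / 2 * ∑ t, w t ≤ ∑ t with absorbs t A, w t := by
  classical
  have card_good (t : T) : p / 2 * Fintype.card τ ≤ #{A ∈ badᶜ | absorbs t A} := by
    have h_sub : ({A | absorbs t A} : Finset τ) ⊆ {A ∈ badᶜ | absorbs t A} ∪ bad := by
      intro A hA
      by_cases A ∈ bad <;> simp_all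
    have h_card : (#{A | absorbs t A} : ℝ) ≤ #{A ∈ badᶜ | absorbs t A} + #bad :=
      mod_cast (card_le_card h_sub).trans (card_union_le _ _)
    linarith [h_abs t]
  have good_nonempty : badᶜ.Nonempty := by
    obtain ⟨t⟩ := ‹Nonempty T›
    have : (0 : ℝ) < #{A ∈ badᶜ | absorbs t A} := lt_of_lt_of_le (by positivity) (card_good t)
    exact (card_pos.1 (mod_cast this)).mono (filter_subset _ _)
  have h_sum : ∑ A ∈ badᶜ, p / 2 * ∑ t, w t ≤ ∑ A ∈ badᶜ, ∑ t with absorbs t A, w t :=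
    calc ∑ A ∈ badᶜ, p / 2 * ∑ t, w t
        ≤ Fintype.card τ * (p / 2 * ∑ t, w t) := by
          have := sum_nonneg fun t (_ : t ∈ univ) ↦ hw t
          rw [sum_const, nsmul_eq_mul]
          gcongr
          exact card_le_univ _
      _ = ∑ t, p / 2 * Fintype.card τ * w t := by rw [← mul_sum]; ring
      _ ≤ ∑ t, #{A ∈ badᶜ | absorbs t A} * w t := by
          gcongr with t
          · exact hw t
          · exact card_good t
      _ = ∑ A ∈ badᶜ, ∑ t with absorbs t A, w t := by
          simp only [sum_filter]
          rw [sum_comm]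
          simp [← sum_filter]
  obtain ⟨A, hA, h_gain⟩ := exists_le_of_sum_le good_nonempty h_sum
  exact ⟨A, mem_compl.1 hA, h_gain⟩

omit [Fintype τ] in
lemma sum_half_pow_card_filter_insert [DecidableEq τ] {F : Finset τ} {A : τ} (hA : A ∉ F) :
    ∑ t, (1 / 2 : ℝ) ^ #{B ∈ insert A F | absorbs t B}
      = ∑ t, (1 / 2 : ℝ) ^ #{B ∈ F | absorbs t B}
        - 1 / 2 * ∑ t with absorbs t A, (1 / 2 : ℝ) ^ #{B ∈ F | absorbs t B} := by
  rw [sum_filter, mul_sum, ← sum_sub_distrib]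
  refine sum_congr rfl fun t _ ↦ ?_
  by_cases h : absorbs t A
  · simp [filter_insert, h, hA, pow_succ]
    ring
  · simp [filter_insert, h]

-- The weight of `t` halves with every chosen `A` that absorbs `t`, so each averaging step shrinks
-- the total weight by a factor `1 - p / 4`.
lemma exists_family_sum_half_pow_le [Nonempty τ] [Nonempty T] (h_refl : ∀ A, conf A A)
    (h_symm : ∀ A B, conf A B → conf B A) (hp : 0 < p) (hq : 0 ≤ q)
    (h_conf : ∀ A, #{B | conf A B} ≤ q) (h_abs : ∀ t, p * Fintype.card τ ≤ #{A | absorbs t A})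
    (k : ℕ) (hk : k * q ≤ p * Fintype.card τ / 2) :
    ∃ F : Finset τ, #F = k ∧ (F : Set τ).Pairwise (fun A B ↦ ¬ conf A B) ∧
      (∀ A ∈ F, ∃ t, absorbs t A) ∧
      ∑ t, (1 / 2 : ℝ) ^ #{A ∈ F | absorbs t A} ≤ Fintype.card T * (1 - p / 4) ^ k := by
  classical
  induction k with
  | zero => exact ⟨∅, by simp⟩
  | succ k ih =>
    push_cast at hk
    obtain ⟨F, rfl, h_pairwise, h_absorb, h_weight⟩ := ih (by linarith)
    let weight (t : T) : ℝ := (1 / 2) ^ #{A ∈ F | absorbs t A}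
    let bad : Finset τ := F.biUnion fun B ↦ {A | conf B A}
    have card_bad : #bad ≤ p * Fintype.card τ / 2 := by
      have h_card : (#bad : ℝ) ≤ ∑ B ∈ F, (#{A | conf B A} : ℝ) := mod_cast card_biUnion_le
      have := sum_le_card_nsmul F _ q fun B _ ↦ h_conf B
      rw [nsmul_eq_mul] at this
      linarith
    obtain ⟨A, hA, h_gain⟩ := exists_notMem_mul_sum_le_sum_filter hp h_abs card_bad
      (w := weight) fun t ↦ by positivity
    have hA_conf : ∀ B ∈ F, ¬ conf B A := by simpa [bad] using hA
    have hAF : A ∉ F := fun h ↦ hA_conf A h (h_refl A)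
    have weight_pos : 0 < ∑ t, weight t := sum_pos (fun t _ ↦ by positivity) univ_nonempty
    refine ⟨insert A F, card_insert_of_notMem hAF, ?_, ?_, ?_⟩
    · rw [coe_insert]
      exact h_pairwise.insert fun B hB _ ↦ ⟨fun h ↦ hA_conf B hB (h_symm _ _ h), hA_conf B hB⟩
    · obtain ⟨t, ht⟩ := nonempty_of_sum_ne_zero (h_gain.trans_lt' (by positivity)).ne'
      exact forall_mem_insert .. |>.2 ⟨⟨t, (mem_filter.1 ht).2⟩, h_absorb⟩
    · have hp_le : p ≤ 1 := by
        obtain ⟨t⟩ := ‹Nonempty T›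
        have h_le : (#{A | absorbs t A} : ℝ) ≤ Fintype.card τ := mod_cast card_le_univ _
        exact le_of_mul_le_mul_right (by linarith [h_abs t])
          (Nat.cast_pos.2 (Fintype.card_pos (α := τ)))
      calc ∑ t, (1 / 2 : ℝ) ^ #{B ∈ insert A F | absorbs t B}
          = ∑ t, weight t - 1 / 2 * ∑ t with absorbs t A, weight t :=
            sum_half_pow_card_filter_insert hAF
        _ ≤ (∑ t, weight t) * (1 - p / 4) := by linarith
        _ ≤ Fintype.card T * (1 - p / 4) ^ #F * (1 - p / 4) := by gcongr; linarith
        _ = _ := by ring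

lemma exists_family_forall_le_card_filter [Nonempty τ] [Nonempty T] (h_refl : ∀ A, conf A A)
    (h_symm : ∀ A B, conf A B → conf B A) (hp : 0 < p) (hq : 0 ≤ q)
    (h_conf : ∀ A, #{B | conf A B} ≤ q) (h_abs : ∀ t, p * Fintype.card τ ≤ #{A | absorbs t A})
    {k l : ℕ} (hk : k * q ≤ p * Fintype.card τ / 2)
    (hl : Fintype.card T * (1 - p / 4) ^ k < (1 / 2) ^ l) :
    ∃ F : Finset τ, #F = k ∧ (F : Set τ).Pairwise (fun A B ↦ ¬ conf A B) ∧
      (∀ A ∈ F, ∃ t, absorbs t A) ∧ ∀ t, l ≤ #{A ∈ F | absorbs t A} := by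
  obtain ⟨F, h_card, h_pairwise, h_absorb, h_weight⟩ :=
    exists_family_sum_half_pow_le h_refl h_symm hp hq h_conf h_abs k hk
  refine ⟨F, h_card, h_pairwise, h_absorb, fun t ↦ ?_⟩
  have h_lt : (1 / 2 : ℝ) ^ #{A ∈ F | absorbs t A} < (1 / 2) ^ l :=
    ((single_le_sum (f := fun t ↦ (1 / 2 : ℝ) ^ #{A ∈ F | absorbs t A})
      (fun _ _ ↦ by positivity) (mem_univ t)).trans h_weight).trans_lt hl
  exact ((pow_lt_pow_iff_right_of_lt_one₀ (by norm_num) (by norm_num)).1 h_lt).le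

end GreedyFamily

section Absorbers

variable {ι α : Type*} [DecidableEq ι] {H : Finset (ι → α)} {t : ι → α} {A : ι → ι → α}

/-- The rows of the square array `A` are disjoint edges, and so are its diagonal together with the
rows in which the diagonal entries are replaced by `t`. Hence the vertices of `A` can be matched
both alone and together with those of `t`. -/
def IsAbsorber (H : Finset (ι → α)) (t : ι → α) (A : ι → ι → α) : Prop :=
  (∀ i, A i ∈ H) ∧ (∀ i j, i ≠ j → ∀ c, A i c ≠ A j c) ∧ (fun i ↦ A i i) ∈ H ∧
    ∀ i, update (A i) i (t i) ∈ H

/-- Two arrays, whose columns are the vertex classes, have a vertex in common. -/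
def Conflict (A B : ι → ι → α) : Prop := ∃ c i j, A i c = B j c

omit [DecidableEq ι] in
lemma conflict_self [Nonempty ι] (A : ι → ι → α) : Conflict A A :=
  let ⟨i⟩ := ‹Nonempty ι›
  ⟨i, i, i, rfl⟩

omit [DecidableEq ι] in
lemma Conflict.symm {A B : ι → ι → α} : Conflict A B → Conflict B A :=
  fun ⟨c, i, j, h⟩ ↦ ⟨c, j, i, h.symm⟩

section Counting

variable [Fintype ι] [DecidableEq α]

instance : DecidableRel (Conflict (ι := ι) (α := α)) :=
  fun A B ↦ inferInstanceAs (Decidable (∃ c i j, A i c = B j c))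

instance : DecidablePred (IsAbsorber H t) :=
  fun A ↦ inferInstanceAs (Decidable ((∀ i, A i ∈ H) ∧ (∀ i j, i ≠ j → ∀ c, A i c ≠ A j c) ∧
    (fun i ↦ A i i) ∈ H ∧ ∀ i, update (A i) i (t i) ∈ H))

variable [Fintype α]

omit [DecidableEq ι] in
lemma card_mul_card_biUnion_le {P : ι × ι × ι → Finset (ι → ι → α)}
    (hP : ∀ p, Fintype.card α * #(P p) ≤ Fintype.card α ^ (Fintype.card ι * Fintype.card ι)) :
    Fintype.card α * #(univ.biUnion P)
      ≤ Fintype.card ι ^ 3 * Fintype.card α ^ (Fintype.card ι * Fintype.card ι) :=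
  calc Fintype.card α * #(univ.biUnion P) ≤ ∑ p, Fintype.card α * #(P p) := by
        rw [← mul_sum]
        gcongr
        exact card_biUnion_le
    _ ≤ ∑ _p : ι × ι × ι, Fintype.card α ^ (Fintype.card ι * Fintype.card ι) :=
        sum_le_sum fun p _ ↦ hP p
    _ = _ := by
        simp only [sum_const, card_univ, Fintype.card_prod, smul_eq_mul]
        ring

lemma card_mul_card_conflict_le (A : ι → ι → α) :
    Fintype.card α * #{B | Conflict A B}
      ≤ Fintype.card ι ^ 3 * Fintype.card α ^ (Fintype.card ι * Fintype.card ι) := by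
  have h_sub : ({B | Conflict A B} : Finset (ι → ι → α))
      ⊆ univ.biUnion fun p : ι × ι × ι ↦ {B | B p.2.2 p.1 = A p.2.1 p.1} := by
    intro B hB
    obtain ⟨c, i, j, h⟩ := (mem_filter.1 hB).2
    exact mem_biUnion.2 ⟨(c, i, j), mem_univ _, by simpa using h.symm⟩
  refine (Nat.mul_le_mul_left _ (card_le_card h_sub)).trans (card_mul_card_biUnion_le fun p ↦ ?_)
  exact (card_filter_curry_apply_eq p.2.2 p.1 (fun _ ↦ A p.2.1 p.1) fun _ _ ↦ rfl).le

variable (ι α) in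
lemma card_mul_card_coincidence_le :
    Fintype.card α * #{A : ι → ι → α | ∃ i j, i ≠ j ∧ ∃ c, A i c = A j c}
      ≤ Fintype.card ι ^ 3 * Fintype.card α ^ (Fintype.card ι * Fintype.card ι) := by
  have h_sub : ({A | ∃ i j, i ≠ j ∧ ∃ c, A i c = A j c} : Finset (ι → ι → α))
      ⊆ univ.biUnion fun p : ι × ι × ι ↦ {A | p.2.1 ≠ p.2.2 ∧ A p.2.2 p.1 = A p.2.1 p.1} := by
    intro A hA
    obtain ⟨i, j, hij, c, h⟩ := (mem_filter.1 hA).2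
    exact mem_biUnion.2 ⟨(c, i, j), mem_univ _, by simp [hij, h]⟩
  refine (Nat.mul_le_mul_left _ (card_le_card h_sub)).trans (card_mul_card_biUnion_le fun p ↦ ?_)
  by_cases hp : p.2.1 = p.2.2
  · simp [hp]
  · simpa [hp] using (card_filter_curry_apply_eq p.2.2 p.1
      (fun A : ι → ι → α ↦ A p.2.1 p.1) fun A v ↦ by rw [update_of_ne hp]).le

/-- The edges through the vertex `x` of class `i` that remain edges when `x` is replaced by `y`. -/
def swappableEdges (H : Finset (ι → α)) (i : ι) (x y : α) : Finset (ι → α) :=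
  {e | e i = x ∧ e ∈ H ∧ update e i y ∈ H}

lemma two_mul_le_card_swappableEdges_add {d : ℕ} {i : ι} (h_deg : ∀ x, d ≤ #{e ∈ H | e i = x})
    (x y : α) : 2 * d ≤ #(swappableEdges H i x y) + #{e : ι → α | e i = x} := by
  let X : Finset (ι → α) := {e ∈ H | e i = x}
  let Y : Finset (ι → α) := {e | e i = x ∧ update e i y ∈ H}
  have card_Y : d ≤ #Y := by
    refine (h_deg y).trans (card_le_card_of_injOn (update · i x) ?_ ?_)
    · rintro e he
      obtain ⟨heH, rfl⟩ := mem_filter.1 he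
      simpa [Y] using heH
    · rintro e he f hf h
      have := congrArg (update · i y) h
      rwa [update_idem, update_idem, update_eq_self_iff.2 (mem_filter.1 he).2.symm,
        update_eq_self_iff.2 (mem_filter.1 hf).2.symm] at this
  have h_union : #(X ∪ Y) ≤ #{e : ι → α | e i = x} :=
    card_le_card fun e ↦ by simp only [X, Y, mem_union, mem_filter, mem_univ]; tauto
  have h_inter : #(X ∩ Y) ≤ #(swappableEdges H i x y) :=
    card_le_card fun e ↦ by simp only [X, Y, swappableEdges, mem_inter, mem_filter, mem_univ]; tauto
  have := card_union_add_card_inter X Y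
  have : d ≤ #X := h_deg x
  lia

/-- Arrays whose diagonal is an edge of `H` and whose rows witness that `t` can be absorbed,
except that the rows may meet. -/
def preabsorbers (H : Finset (ι → α)) (t : ι → α) : Finset (ι → ι → α) :=
  H.biUnion fun u ↦ Fintype.piFinset fun i ↦ swappableEdges H i (u i) (t i)

lemma mem_preabsorbers : A ∈ preabsorbers H t ↔
    (fun i ↦ A i i) ∈ H ∧ ∀ i, A i ∈ H ∧ update (A i) i (t i) ∈ H := by
  simp only [preabsorbers, mem_biUnion, Fintype.mem_piFinset, swappableEdges, mem_filter, mem_univ,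
    true_and]
  constructor
  · rintro ⟨u, hu, hA⟩
    rw [show (fun i ↦ A i i) = u from funext fun i ↦ (hA i).1]
    exact ⟨hu, fun i ↦ (hA i).2⟩
  · exact fun ⟨h_diag, hA⟩ ↦ ⟨_, h_diag, fun i ↦ ⟨rfl, hA i⟩⟩

lemma card_mul_pow_le_card_preabsorbers {s : ℕ} (hs : ∀ i x y, s ≤ #(swappableEdges H i x y))
    (t : ι → α) : #H * s ^ Fintype.card ι ≤ #(preabsorbers H t) := by
  rw [preabsorbers, card_biUnion]
  · refine card_nsmul_le_sum _ _ _ fun u _ ↦ ?_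
    rw [Fintype.card_piFinset]
    exact pow_card_le_prod _ _ _ fun i _ ↦ hs ..
  · intro u _ v _ huv
    refine disjoint_left.2 fun A hAu hAv ↦ huv (funext fun i ↦ ?_)
    simp only [Fintype.mem_piFinset, swappableEdges, mem_filter] at hAu hAv
    rw [← (hAu i).2.1, (hAv i).2.1]

lemma card_mul_mul_pow_le_card_isAbsorber {s : ℕ} (hs : ∀ i x y, s ≤ #(swappableEdges H i x y))
    (t : ι → α) :
    Fintype.card α * (#H * s ^ Fintype.card ι) ≤ Fintype.card α * #{A | IsAbsorber H t A} +
      Fintype.card ι ^ 3 * Fintype.card α ^ (Fintype.card ι * Fintype.card ι) := by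
  have h_sub : preabsorbers H t ⊆ ({A | IsAbsorber H t A} : Finset (ι → ι → α)) ∪
      ({A | ∃ i j, i ≠ j ∧ ∃ c, A i c = A j c} : Finset (ι → ι → α)) := by
    intro A hA
    obtain ⟨h_diag, h_rows⟩ := mem_preabsorbers.1 hA
    by_cases h : ∃ i j, i ≠ j ∧ ∃ c, A i c = A j c
    · exact mem_union_right _ (by simpa using h)
    · push Not at h
      exact mem_union_left _ (mem_filter.2
        ⟨mem_univ _, fun i ↦ (h_rows i).1, h, h_diag, fun i ↦ (h_rows i).2⟩)
  calc Fintype.card α * (#H * s ^ Fintype.card ι)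
      ≤ Fintype.card α * (#{A | IsAbsorber H t A} +
          #{A : ι → ι → α | ∃ i j, i ≠ j ∧ ∃ c, A i c = A j c}) := by
        gcongr
        exact (card_mul_pow_le_card_preabsorbers hs t).trans
          ((card_le_card h_sub).trans (card_union_le _ _))
    _ ≤ _ := by
        rw [mul_add]
        exact Nat.add_le_add_left (card_mul_card_coincidence_le ι α) _

end Counting

lemma card_filter_apply_eq [Fintype α] [DecidableEq α] (k : Fin 3) (x : α) :
    #{e : Fin 3 → α | e k = x} = Fintype.card α ^ 2 := by
  refine Nat.eq_of_mul_eq_mul_left (Fintype.card_pos_iff.2 ⟨x⟩) ?_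
  rw [card_mul_card_filter_apply_eq k (fun _ ↦ x) fun _ _ ↦ rfl, Fintype.card_fin]
  ring

lemma card_pow_div_le_card_isAbsorber [Fintype α] [DecidableEq α] {H : Finset (Fin 3 → α)}
    (h_card : 200000 ≤ Fintype.card α)
    (h_deg : ∀ k x, (5 / 9 : ℝ) * Fintype.card α ^ 2 ≤ #{e ∈ H | e k = x}) (t : Fin 3 → α) :
    (1 / 2000 : ℝ) * Fintype.card α ^ 9 ≤ #{A | IsAbsorber H t A} := by
  set n := Fintype.card α with hn
  have n_ge : (200000 : ℝ) ≤ n := mod_cast h_card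
  have card_H : (5 / 9 : ℝ) * n ^ 3 ≤ #H := by
    calc (5 / 9 : ℝ) * n ^ 3 = ∑ _x : α, (5 / 9 : ℝ) * n ^ 2 := by simp [← hn]; ring
      _ ≤ ∑ x : α, (#{e ∈ H | e 0 = x} : ℝ) := sum_le_sum fun x _ ↦ h_deg 0 x
      _ = #H := mod_cast (card_eq_sum_card_fiberwise fun _ _ ↦ mem_univ _).symm
  let s : ℕ := 2 * ⌈(5 / 9 : ℝ) * n ^ 2⌉₊ - n ^ 2
  have s_ge : (1 / 9 : ℝ) * n ^ 2 ≤ s := by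
    have h_sub : ((2 * ⌈(5 / 9 : ℝ) * n ^ 2⌉₊ : ℕ) : ℝ) ≤ (s + n ^ 2 : ℕ) :=
      Nat.cast_le.2 (Nat.sub_le_iff_le_add.1 le_rfl)
    push_cast at h_sub
    linarith [Nat.le_ceil ((5 / 9 : ℝ) * n ^ 2)]
  have card_swappable (i : Fin 3) (x y : α) : s ≤ #(swappableEdges H i x y) := by
    have h := two_mul_le_card_swappableEdges_add (fun z ↦ Nat.ceil_le.2 (h_deg i z)) x y
    rw [card_filter_apply_eq] at h
    exact Nat.sub_le_iff_le_add.2 h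
  have h_count : (n : ℝ) * (#H * s ^ 3) ≤ n * #{A | IsAbsorber H t A} + 27 * n ^ 9 := by
    have := card_mul_mul_pow_le_card_isAbsorber card_swappable t
    simp only [Fintype.card_fin, ← hn] at this
    exact_mod_cast this
  have h_main : (n : ℝ) * (5 / 9 * n ^ 3 * (1 / 9 * n ^ 2) ^ 3) ≤ n * (#H * s ^ 3) := by gcongr
  have h_large : 200000 * (n : ℝ) ^ 9 ≤ n * n ^ 9 := by gcongr
  refine le_of_mul_le_mul_left ?_ (show (0 : ℝ) < n by linarith)
  linarith [pow_nonneg (show (0 : ℝ) ≤ n by linarith) 9]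

end Absorbers

section Absorption

variable {ι α : Type*} [Fintype ι] [DecidableEq ι] [DecidableEq α] {H M : Finset (ι → α)}
  {F : Finset (ι → ι → α)}

/-- The vertices of class `c` that lie on an array of `F`. -/
def occupied (F : Finset (ι → ι → α)) (c : ι) : Finset α :=
  F.biUnion fun A ↦ univ.image fun i ↦ A i c

omit [DecidableEq ι] in
lemma mem_occupied {c : ι} {z : α} : z ∈ occupied F c ↔ ∃ A ∈ F, ∃ i, A i c = z := by
  simp [occupied]

omit [DecidableEq ι] in
lemma card_occupied (h_pairwise : (F : Set (ι → ι → α)).Pairwise fun A B ↦ ¬ Conflict A B)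
    (h_rows : ∀ A ∈ F, ∀ i j, i ≠ j → ∀ c, A i c ≠ A j c) (c : ι) :
    #(occupied F c) = Fintype.card ι * #F := by
  rw [occupied, card_biUnion, mul_comm]
  · refine sum_const_nat fun A hA ↦ card_image_of_injective _ fun i j h ↦ ?_
    exact by_contra fun hij ↦ h_rows A hA i j hij c h
  · intro A hA B hB hAB
    simp only [disjoint_left, mem_image, mem_univ, true_and]
    rintro _ ⟨i, rfl⟩ ⟨j, h⟩
    exact h_pairwise hA hB hAB ⟨c, i, j, h.symm⟩

/-- The edges of `H` that contain no vertex of the sets `W c`. -/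
def edgesAvoiding (H : Finset (ι → α)) (W : ι → Finset α) : Finset (ι → α) :=
  {e ∈ H | ∀ c, e c ∉ W c}

omit [DecidableEq ι] in
lemma mem_edgesAvoiding {W : ι → Finset α} {e : ι → α} :
    e ∈ edgesAvoiding H W ↔ e ∈ H ∧ ∀ c, e c ∉ W c := mem_filter

lemma card_sq_mul_card_filter_eq_and_eq [Fintype α] {i j : ι} (hij : i ≠ j) (x y : α) :
    Fintype.card α ^ 2 * #{e : ι → α | e i = x ∧ e j = y} = Fintype.card α ^ Fintype.card ι := by
  rw [← card_mul_card_filter_apply_eq i (fun _ ↦ x) fun _ _ ↦ rfl, sq, mul_assoc, card_filter,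
    ← smul_eq_mul (Fintype.card α) (∑ _, _), ← sum_sum_update _ j]
  simp [hij, ite_and]

omit [DecidableEq ι] in
lemma card_sq_mul_degree_le [Fintype α] {W : ι → Finset α} {w : ℕ} (hW : ∀ c, #(W c) ≤ w) {c : ι}
    {z : α} (hz : z ∉ W c) :
    Fintype.card α ^ 2 * #{e ∈ H | e c = z} ≤
      Fintype.card α ^ 2 * #{e ∈ edgesAvoiding H W | e c = z} +
        Fintype.card ι * w * Fintype.card α ^ Fintype.card ι := by
  classical
  let lost (c' : ι) : Finset (ι → α) := (W c').biUnion fun x ↦ {e | e c = z ∧ e c' = x}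
  have card_lost {c' : ι} (h : c ≠ c') :
      Fintype.card α ^ 2 * #(lost c') ≤ w * Fintype.card α ^ Fintype.card ι :=
    calc Fintype.card α ^ 2 * #(lost c')
        ≤ ∑ x ∈ W c', Fintype.card α ^ 2 * #{e : ι → α | e c = z ∧ e c' = x} := by
          rw [← mul_sum]
          gcongr
          exact card_biUnion_le
      _ = #(W c') * Fintype.card α ^ Fintype.card ι := by
          simp only [card_sq_mul_card_filter_eq_and_eq h, sum_const, smul_eq_mul]
      _ ≤ _ := by gcongr; exact hW c'
  have h_sub : ({e ∈ H | e c = z} : Finset (ι → α)) ⊆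
      {e ∈ edgesAvoiding H W | e c = z} ∪ (univ.erase c).biUnion lost := by
    intro e he
    obtain ⟨heH, rfl⟩ := mem_filter.1 he
    by_cases h_avoid : ∀ c, e c ∉ W c
    · exact mem_union_left _ (mem_filter.2 ⟨mem_edgesAvoiding.2 ⟨heH, h_avoid⟩, rfl⟩)
    · push Not at h_avoid
      obtain ⟨c', hc'⟩ := h_avoid
      have : c' ≠ c := by rintro rfl; exact hz hc'
      exact mem_union_right _ (by simpa [lost] using ⟨c', this, hc'⟩)
  calc Fintype.card α ^ 2 * #{e ∈ H | e c = z}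
      ≤ Fintype.card α ^ 2 *
          (#{e ∈ edgesAvoiding H W | e c = z} + ∑ c' ∈ univ.erase c, #(lost c')) := by
        gcongr
        exact (card_le_card h_sub).trans
          ((card_union_le _ _).trans (Nat.add_le_add_left card_biUnion_le _))
    _ ≤ Fintype.card α ^ 2 * #{e ∈ edgesAvoiding H W | e c = z} +
          ∑ _c' ∈ univ.erase c, w * Fintype.card α ^ Fintype.card ι := by
        rw [mul_add, mul_sum]
        exact Nat.add_le_add_left
          (sum_le_sum fun c' hc' ↦ card_lost (ne_of_mem_erase hc').symm) _
    _ ≤ _ := by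
        rw [sum_const, smul_eq_mul, ← mul_assoc]
        gcongr
        exact card_le_univ _

omit [DecidableEq α] [DecidableEq ι] [Fintype ι] in
lemma isPartiteMatching_of_forall_exists_apply_eq [Nonempty ι] [Fintype α]
    (h_card : #M ≤ Fintype.card α) (h_cover : ∀ c z, ∃ e ∈ M, e c = z) :
    IsPartiteMatching M ∧ #M = Fintype.card α := by
  classical
  have image_eq (c : ι) : M.image (fun e ↦ e c) = univ :=
    eq_univ_of_forall fun z ↦ mem_image.2 (h_cover c z)
  have card_eq : #M = Fintype.card α := by
    obtain ⟨c⟩ := ‹Nonempty ι›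
    refine h_card.antisymm ?_
    rw [← card_univ, ← image_eq c]
    exact card_image_le
  refine ⟨fun e he f hf h_ne c h ↦ h_ne ?_, card_eq⟩
  exact (card_image_iff.1 (by rw [image_eq, card_univ, card_eq] :
    #(M.image fun e ↦ e c) = #M)) he hf h

/-- The matching that covers the vertices of the array `A` and those of `t`: the diagonal of `A`
and its rows with the diagonal entries replaced by `t`. -/
def absorbedEdges (A : ι → ι → α) (t : ι → α) : Finset (ι → α) :=
  insert (fun i ↦ A i i) (univ.image fun i ↦ update (A i) i (t i))

lemma IsAbsorber.absorbedEdges_subset {A : ι → ι → α} {t : ι → α} (hA : IsAbsorber H t A) :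
    absorbedEdges A t ⊆ H :=
  insert_subset hA.2.2.1 (image_subset_iff.2 fun i _ ↦ hA.2.2.2 i)

lemma card_absorbedEdges_le (A : ι → ι → α) (t : ι → α) :
    #(absorbedEdges A t) ≤ Fintype.card ι + 1 :=
  (card_insert_le _ _).trans (Nat.add_le_add_right card_image_le 1)

lemma exists_mem_absorbedEdges_apply_eq_right (A : ι → ι → α) (t : ι → α) (c : ι) :
    ∃ e ∈ absorbedEdges A t, e c = t c :=
  ⟨update (A c) c (t c), mem_insert_of_mem (mem_image_of_mem _ (mem_univ c)), update_self ..⟩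

lemma exists_mem_absorbedEdges_apply_eq_left (A : ι → ι → α) (t : ι → α) (i c : ι) :
    ∃ e ∈ absorbedEdges A t, e c = A i c := by
  by_cases hic : c = i
  · subst hic
    exact ⟨_, mem_insert_self .., rfl⟩
  · exact ⟨update (A i) i (t i), mem_insert_of_mem (mem_image_of_mem _ (mem_univ i)),
      update_of_ne hic ..⟩

omit [Fintype ι] [DecidableEq ι] [DecidableEq α] in
lemma exists_transversals {L : ι → Finset α} {l : ℕ} (hL : ∀ c, #(L c) = l) :
    ∃ t : Fin l → ι → α, ∀ c, ∀ z ∈ L c, ∃ j, t j c = z :=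
  ⟨fun j c ↦ ((L c).equivFinOfCardEq (hL c)).symm j, fun c z hz ↦
    ⟨(L c).equivFinOfCardEq (hL c) ⟨z, hz⟩, by simp⟩⟩

/-- The matching in which every array `A j` absorbs the vertices of `t j`, and the other arrays of
`F` contribute their rows. -/
def absorption {l : ℕ} (F : Finset (ι → ι → α)) (A : Fin l → ι → ι → α) (t : Fin l → ι → α) :
    Finset (ι → α) :=
  (F \ univ.image A).biUnion (fun B ↦ univ.image B) ∪ univ.biUnion fun j ↦ absorbedEdges (A j) (t j)

variable {l : ℕ} {A : Fin l → ι → ι → α} {t : Fin l → ι → α}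

lemma absorption_subset (hF : ∀ B ∈ F, ∀ i, B i ∈ H) (hA : ∀ j, IsAbsorber H (t j) (A j)) :
    absorption F A t ⊆ H :=
  union_subset
    (biUnion_subset.2 fun B hB ↦ image_subset_iff.2 fun i _ ↦ hF B (mem_sdiff.1 hB).1 i)
    (biUnion_subset.2 fun j _ ↦ (hA j).absorbedEdges_subset)

lemma card_absorption_le (hA_inj : Injective A) (hA : ∀ j, A j ∈ F) (t : Fin l → ι → α) :
    #(absorption F A t) ≤ Fintype.card ι * #F + l := by
  have h_image : univ.image A ⊆ F := image_subset_iff.2 fun j _ ↦ hA j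
  have card_image : #(univ.image A) = l := by simp [card_image_of_injective _ hA_inj]
  have card_unused : #((F \ univ.image A).biUnion fun B ↦ univ.image B)
      ≤ (#F - l) * Fintype.card ι := by
    have h_sdiff : #(F \ univ.image A) = #F - l := by
      rw [card_sdiff_of_subset h_image, card_image]
    rw [← h_sdiff]
    exact card_biUnion_le_card_mul _ _ _ fun B _ ↦ card_image_le
  have card_absorbed : #(univ.biUnion fun j ↦ absorbedEdges (A j) (t j))
      ≤ l * (Fintype.card ι + 1) := by
    simpa using card_biUnion_le_card_mul (univ : Finset (Fin l)) (fun j ↦ absorbedEdges (A j) (t j))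
      _ fun j _ ↦ card_absorbedEdges_le ..
  calc #(absorption F A t) ≤ (#F - l) * Fintype.card ι + l * (Fintype.card ι + 1) :=
        (card_union_le _ _).trans (Nat.add_le_add card_unused card_absorbed)
    _ = Fintype.card ι * (#F - l + l) + l := by ring
    _ = Fintype.card ι * #F + l := by rw [Nat.sub_add_cancel (card_image ▸ card_le_card h_image)]

lemma exists_mem_absorption_apply_eq {c : ι} {z : α}
    (hz : z ∈ occupied F c ∨ ∃ j, t j c = z) : ∃ e ∈ absorption F A t, e c = z := by
  have absorbed (j : Fin l) (h : ∃ e ∈ absorbedEdges (A j) (t j), e c = z) :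
      ∃ e ∈ absorption F A t, e c = z :=
    h.imp fun e he ↦ ⟨mem_union_right _ (mem_biUnion.2 ⟨j, mem_univ j, he.1⟩), he.2⟩
  rcases hz with hz | ⟨j, rfl⟩
  · obtain ⟨B, hB, i, rfl⟩ := mem_occupied.1 hz
    by_cases hB_used : B ∈ univ.image A
    · obtain ⟨j, -, rfl⟩ := mem_image.1 hB_used
      exact absorbed j (exists_mem_absorbedEdges_apply_eq_left ..)
    · exact ⟨B i, mem_union_left _ (mem_biUnion.2
        ⟨B, mem_sdiff.2 ⟨hB, hB_used⟩, mem_image_of_mem B (mem_univ i)⟩), rfl⟩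
  · exact absorbed j (exists_mem_absorbedEdges_apply_eq_right ..)

lemma exists_perfect_matching_of_absorbing_family [Nonempty ι] [Fintype α]
    (h_pairwise : (F : Set (ι → ι → α)).Pairwise fun A B ↦ ¬ Conflict A B)
    (h_absorber : ∀ A ∈ F, ∃ t, IsAbsorber H t A) (hMH : M ⊆ edgesAvoiding H (occupied F))
    (hM : IsPartiteMatching M)
    (h_card : ∀ t, Fintype.card α ≤ #M + Fintype.card ι * #F + #{A ∈ F | IsAbsorber H t A}) :
    ∃ E ⊆ H, IsPartiteMatching E ∧ #E = Fintype.card α := by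
  let leftover (c : ι) : Finset α := (M.image (fun e ↦ e c) ∪ occupied F c)ᶜ
  have h_rows : ∀ A ∈ F, ∀ i j, i ≠ j → ∀ c, A i c ≠ A j c := fun A hA ↦
    (h_absorber A hA).choose_spec.2.1
  have card_leftover (c : ι) :
      #M + Fintype.card ι * #F + #(leftover c) = Fintype.card α := by
    have h_disjoint : Disjoint (M.image fun e ↦ e c) (occupied F c) :=
      disjoint_left.2 <| forall_mem_image.2 fun e he ↦ (mem_edgesAvoiding.1 (hMH he)).2 c
    rw [← hM.card_image c, ← card_occupied h_pairwise h_rows c, ← card_union_of_disjoint h_disjoint,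
      card_add_card_compl]
  obtain ⟨c₀⟩ := ‹Nonempty ι›
  obtain ⟨t, ht⟩ := exists_transversals (L := leftover) (l := #(leftover c₀)) fun c ↦ by
    have := card_leftover c
    have := card_leftover c₀
    lia
  obtain ⟨A, hA_inj, hA⟩ := exists_injective_choice (fun j ↦ {A ∈ F | IsAbsorber H (t j) A})
    fun j ↦ by
      have := h_card (t j)
      have := card_leftover c₀
      rw [Fintype.card_fin]
      lia
  have : Nonempty ι := ⟨c₀⟩
  refine ⟨M ∪ absorption F A t, union_subset ?_ (absorption_subset ?_ fun j ↦ ?_),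
    isPartiteMatching_of_forall_exists_apply_eq ?_ fun c z ↦ ?_⟩
  · exact fun e he ↦ (mem_edgesAvoiding.1 (hMH he)).1
  · exact fun A hA ↦ (h_absorber A hA).choose_spec.1
  · exact (mem_filter.1 (hA j)).2
  · have h_absorption := card_absorption_le hA_inj (fun j ↦ (mem_filter.1 (hA j)).1) t
    have := card_leftover c₀
    have := card_union_le M (absorption F A t)
    lia
  · by_cases hzM : ∃ e ∈ M, e c = z
    · exact hzM.imp fun e he ↦ ⟨mem_union_left _ he.1, he.2⟩
    · have hz : z ∈ occupied F c ∨ ∃ j, t j c = z := by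
        refine or_iff_not_imp_left.2 fun hz ↦ ht c z ?_
        simpa [leftover, hz] using hzM
      exact (exists_mem_absorption_apply_eq hz).imp fun e he ↦ ⟨mem_union_right _ he.1, he.2⟩

end Absorption

section Parameters

lemma pow_three_mul_one_sub_pow_lt_half_pow {x q : ℝ} (hx : 0 ≤ x) (hq : q ≤ 1) {k l : ℕ}
    (h : 6 * √x + l < k * q) : x ^ 3 * (1 - q) ^ k < (1 / 2) ^ l := by
  have cube_le : x ^ 3 ≤ Real.exp (6 * √x) :=
    calc x ^ 3 = √x ^ 6 := by rw [show 6 = 2 * 3 from rfl, pow_mul, Real.sq_sqrt hx]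
      _ ≤ Real.exp √x ^ 6 := by
          gcongr
          linarith [Real.add_one_le_exp √x]
      _ = Real.exp (6 * √x) := by rw [← Real.exp_nat_mul]; norm_num
  have pow_le : (1 - q) ^ k ≤ Real.exp (-(k * q)) :=
    calc (1 - q) ^ k ≤ Real.exp (-q) ^ k :=
          pow_le_pow_left₀ (sub_nonneg.2 hq) (Real.one_sub_le_exp_neg q) k
      _ = Real.exp (-(k * q)) := by rw [← Real.exp_nat_mul, mul_neg]
  have le_half_pow : Real.exp (-l) ≤ (1 / 2) ^ l :=
    calc Real.exp (-l) = Real.exp (-1) ^ l := by rw [← Real.exp_nat_mul]; simp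
      _ ≤ (1 / 2) ^ l := by
          gcongr
          rw [Real.exp_neg, ← one_div]
          exact one_div_le_one_div_of_le two_pos (by linarith [Real.add_one_le_exp 1])
  calc x ^ 3 * (1 - q) ^ k ≤ Real.exp (6 * √x) * Real.exp (-(k * q)) := by
        gcongr
    _ = Real.exp (6 * √x - k * q) := by rw [← Real.exp_add, sub_eq_add_neg]
    _ < Real.exp (-l) := Real.exp_lt_exp.2 (by linarith)
    _ ≤ _ := le_half_pow

lemma le_mul_pow_of_div_pow_lt {C γ x : ℝ} (hC : 0 ≤ C) (hγ : 0 < γ) (hγ_le : γ ≤ 1) {m : ℕ}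
    (h : C / γ ^ m < x) {a : ℕ} (ha : a ≤ m) : C ≤ x * γ ^ a := by
  have hx : 0 < x := h.trans_le' (by positivity)
  rw [div_lt_iff₀ (by positivity)] at h
  exact h.le.trans (mul_le_mul_of_nonneg_left (pow_le_pow_of_le_one hγ.le hγ_le ha) hx.le)

lemma six_mul_sqrt_add_lt {γ x R : ℝ} (hγ : 0 < γ) (hγ_le : γ ≤ 1)
    (hx : 10 ^ 22 / γ ^ 12 < x) (hR : 0 ≤ R) (hRγ : R * γ ≤ 35) :
    6 * √x + 4 * R ^ 3 < (γ * x / 108000 - 1) / 8000 := by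
  have large {a : ℕ} : a ≤ 12 → (10 : ℝ) ^ 22 ≤ x * γ ^ a :=
    le_mul_pow_of_div_pow_lt (by positivity) hγ hγ_le hx
  have hx_pos : 0 < x := hx.trans_le' (by positivity)
  have sqrt_le : √x ≤ γ * x / 10 ^ 11 := by
    refine Real.sqrt_le_iff.2 ⟨by positivity, ?_⟩
    calc x = x * 10 ^ 22 / 10 ^ 22 := by ring
      _ ≤ x * (x * γ ^ 2) / 10 ^ 22 := by
          gcongr
          exact large (by norm_num)
      _ = (γ * x / 10 ^ 11) ^ 2 := by ring
  have cube_le : R ^ 3 ≤ γ * x / 10 ^ 16 := by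
    refine le_of_mul_le_mul_right ?_ (pow_pos hγ 3)
    calc R ^ 3 * γ ^ 3 = (R * γ) ^ 3 := by ring
      _ ≤ 35 ^ 3 := by gcongr
      _ ≤ 10 ^ 22 / 10 ^ 16 := by norm_num
      _ ≤ x * γ ^ 4 / 10 ^ 16 := by
          gcongr
          exact large (by norm_num)
      _ = γ * x / 10 ^ 16 * γ ^ 3 := by ring
  have : (10 : ℝ) ^ 22 ≤ x * γ ^ 1 := large (by norm_num)
  linarith

lemma exists_parameters {γ : ℝ} (hγ : 0 < γ) (hγ_le : γ ≤ 1) {n : ℕ}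
    (hn : 10 ^ 22 / γ ^ 12 < (n : ℝ)) :
    ∃ R k : ℕ, 2 ≤ R ∧ 2 * R ^ 4 < n ∧ 17 / R ≤ γ / 2 ∧ k ≤ γ * n / 108000 ∧
      (n : ℝ) ^ 3 * (1 - 1 / 2000 / 4) ^ k < (1 / 2) ^ (4 * R ^ 3) := by
  have one_le : 1 ≤ 1 / γ := (one_le_div hγ).2 hγ_le
  have le_R : 34 / γ ≤ ⌈34 / γ⌉₊ := Nat.le_ceil _
  have R_le : (⌈34 / γ⌉₊ : ℝ) ≤ 35 / γ :=
    (Nat.ceil_lt_add_one (by positivity)).le.trans <| by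
      rw [show 35 / γ = 34 / γ + 1 / γ by ring]
      gcongr
  have large_R : (34 : ℝ) ≤ ⌈34 / γ⌉₊ := le_R.trans' <| by
    rw [show 34 / γ = 34 * (1 / γ) by ring]
    linarith
  have R_mul_le : ⌈34 / γ⌉₊ * γ ≤ 35 := (le_div_iff₀ hγ).1 R_le
  refine ⟨⌈34 / γ⌉₊, ⌊γ * n / 108000⌋₊, ?_, ?_, ?_, Nat.floor_le (by positivity), ?_⟩
  · have : (2 : ℝ) ≤ ⌈34 / γ⌉₊ := by linarith
    exact_mod_cast this
  · have : (2 * ⌈34 / γ⌉₊ ^ 4 : ℝ) < n := by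
      refine lt_of_mul_lt_mul_right ?_ (by positivity : 0 ≤ γ ^ 4)
      calc 2 * (⌈34 / γ⌉₊ : ℝ) ^ 4 * γ ^ 4 = 2 * (⌈34 / γ⌉₊ * γ) ^ 4 := by ring
        _ ≤ 2 * 35 ^ 4 := by gcongr
        _ < 10 ^ 22 := by norm_num
        _ ≤ n * γ ^ 4 := le_mul_pow_of_div_pow_lt (by positivity) hγ hγ_le hn (by norm_num)
    exact_mod_cast this
  · rw [div_le_div_iff₀ (by linarith) two_pos]
    linarith [(div_le_iff₀ hγ).1 le_R]
  · refine pow_three_mul_one_sub_pow_lt_half_pow n.cast_nonneg (by norm_num) ?_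
    have := six_mul_sqrt_add_lt hγ hγ_le hn (by positivity) R_mul_le
    push_cast
    linarith [Nat.lt_floor_add_one (γ * n / 108000)]

end Parameters

section MainArgument

variable {α : Type*} [Fintype α] [DecidableEq α] {H : Finset (Fin 3 → α)}

lemma le_one_of_mul_card_sq_le_degree {δ : ℝ} {k : Fin 3} {x : α}
    (h : δ * Fintype.card α ^ 2 ≤ #{e ∈ H | e k = x}) : δ ≤ 1 := by
  have h_le : (#{e ∈ H | e k = x} : ℝ) ≤ Fintype.card α ^ 2 := by
    exact_mod_cast (card_le_card (filter_subset_filter _ (subset_univ H))).trans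
      (card_filter_apply_eq k x).le
  have card_pos : (0 : ℝ) < Fintype.card α := Nat.cast_pos.2 (Fintype.card_pos_iff.2 ⟨x⟩)
  exact le_of_mul_le_mul_right (by linarith) (pow_pos card_pos 2)

lemma degree_le_degree_edgesAvoiding_add {W : Fin 3 → Finset α} {w : ℕ} (hW : ∀ c, #(W c) ≤ w)
    {c : Fin 3} {z : α} (hz : z ∉ W c) :
    #{e ∈ H | e c = z} ≤ #{e ∈ edgesAvoiding H W | e c = z} + 3 * w * Fintype.card α := by
  have card_pos : 0 < Fintype.card α := Fintype.card_pos_iff.2 ⟨z⟩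
  refine Nat.le_of_mul_le_mul_left ?_ (pow_pos card_pos 2)
  convert card_sq_mul_degree_le hW hz using 1
  rw [Fintype.card_fin]
  ring

lemma exists_absorbing_family [Nonempty α] (h_card : 200000 ≤ Fintype.card α)
    (h_deg : ∀ k x, (5 / 9 : ℝ) * Fintype.card α ^ 2 ≤ #{e ∈ H | e k = x}) {k l : ℕ}
    (hk : (k : ℝ) ≤ Fintype.card α / 108000)
    (hl : (Fintype.card α : ℝ) ^ 3 * (1 - 1 / 2000 / 4) ^ k < (1 / 2) ^ l) :
    ∃ F : Finset (Fin 3 → Fin 3 → α), #F = k ∧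
      (F : Set (Fin 3 → Fin 3 → α)).Pairwise (fun A B ↦ ¬ Conflict A B) ∧
      (∀ A ∈ F, ∃ t, IsAbsorber H t A) ∧ ∀ t, l ≤ #{A ∈ F | IsAbsorber H t A} := by
  have card_arrays : Fintype.card (Fin 3 → Fin 3 → α) = Fintype.card α ^ 9 := by
    simp only [Fintype.card_fun, Fintype.card_fin]
    ring
  have h_conf (A : Fin 3 → Fin 3 → α) :
      (#{B | Conflict A B} : ℝ) ≤ 27 * Fintype.card α ^ 8 := by
    have : #{B | Conflict A B} ≤ 27 * Fintype.card α ^ 8 := by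
      refine Nat.le_of_mul_le_mul_left ?_ (Fintype.card_pos (α := α))
      convert card_mul_card_conflict_le A using 1
      rw [Fintype.card_fin]
      ring
    exact_mod_cast this
  refine exists_family_forall_le_card_filter conflict_self (fun _ _ ↦ Conflict.symm)
    (p := 1 / 2000) (by norm_num) (by positivity) h_conf (fun t ↦ ?_) ?_ ?_
  · rw [card_arrays, Nat.cast_pow]
    exact card_pow_div_le_card_isAbsorber h_card h_deg t
  · rw [card_arrays, Nat.cast_pow]
    calc (k : ℝ) * (27 * (Fintype.card α : ℝ) ^ 8)
        ≤ (Fintype.card α : ℝ) / 108000 * (27 * (Fintype.card α : ℝ) ^ 8) := by gcongr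
      _ = 1 / 2000 * (Fintype.card α : ℝ) ^ 9 / 2 := by ring
  · rwa [Fintype.card_fun, Fintype.card_fin, Nat.cast_pow]

lemma mul_card_sq_le_degree_edgesAvoiding {δ ε : ℝ} {W : Fin 3 → Finset α} {w : ℕ}
    (hW : ∀ c, #(W c) ≤ w) (hw : 3 * (w : ℝ) ≤ ε * Fintype.card α) {c : Fin 3} {z : α}
    (hz : z ∉ W c) (h_deg : (δ + ε) * Fintype.card α ^ 2 ≤ #{e ∈ H | e c = z}) :
    δ * Fintype.card α ^ 2 ≤ #{e ∈ edgesAvoiding H W | e c = z} := by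
  have h_loss : (#{e ∈ H | e c = z} : ℝ) ≤
      #{e ∈ edgesAvoiding H W | e c = z} + 3 * w * Fintype.card α :=
    mod_cast degree_le_degree_edgesAvoiding_add hW hz
  have h_w : 3 * (w : ℝ) * Fintype.card α ≤ ε * Fintype.card α * Fintype.card α := by gcongr
  linarith

lemma exists_perfect_matching {γ : ℝ} (hγ : 0 < γ)
    (h_card : 10 ^ 22 / γ ^ 12 < (Fintype.card α : ℝ))
    (h_deg : ∀ k x, (5 / 9 + γ) * Fintype.card α ^ 2 ≤ #{e ∈ H | e k = x}) :
    ∃ M ⊆ H, IsPartiteMatching M ∧ #M = Fintype.card α := by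
  have card_pos : (0 : ℝ) < Fintype.card α := h_card.trans_le' (by positivity)
  have : Nonempty α := Fintype.card_pos_iff.1 (mod_cast card_pos)
  have hγ_le : γ ≤ 1 := by
    linarith [le_one_of_mul_card_sq_le_degree (h_deg 0 (Classical.arbitrary α))]
  have card_large : 200000 ≤ Fintype.card α := by
    have : (10 : ℝ) ^ 22 ≤ Fintype.card α := by
      simpa using le_mul_pow_of_div_pow_lt (by positivity) hγ hγ_le h_card (Nat.zero_le 12)
    exact_mod_cast this.trans' (by norm_num : (200000 : ℝ) ≤ 10 ^ 22)
  obtain ⟨R, k, hR, hRn, hRγ, hk, h_small⟩ := exists_parameters hγ hγ_le h_card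
  have hk' : (k : ℝ) ≤ Fintype.card α / 108000 :=
    hk.trans (by gcongr; exact mul_le_of_le_one_left card_pos.le hγ_le)
  obtain ⟨F, rfl, h_pairwise, h_absorber, h_many⟩ := exists_absorbing_family card_large
    (fun k x ↦ (h_deg k x).trans' (by gcongr; linarith)) hk' h_small
  have card_W (c : Fin 3) : #(occupied F c) ≤ 3 * #F :=
    (card_occupied h_pairwise (fun A hA ↦ (h_absorber A hA).choose_spec.2.1) c).le
  have deg_avoiding (c : Fin 3) (z : α) (hz : z ∉ occupied F c) :
      (5 / 9 + 17 / R) * (Fintype.card α : ℝ) ^ 2 ≤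
        #{e ∈ edgesAvoiding H (occupied F) | e c = z} := by
    refine mul_card_sq_le_degree_edgesAvoiding (ε := γ / 2) card_W ?_ hz
      ((h_deg c z).trans' (mul_le_mul_of_nonneg_right (by linarith) (by positivity)))
    push_cast
    linarith [mul_pos hγ card_pos]
  obtain ⟨M, hMH, hM, h_almost⟩ := exists_almost_perfect_matching card_W hR hRn deg_avoiding
  refine exists_perfect_matching_of_absorbing_family h_pairwise h_absorber hMH hM fun t ↦ ?_
  rw [Fintype.card_fin]
  have := h_many t
  lia

end MainArgument

end PerfectMatchings

/-- There is a constant `c > 0` such that for all `γ > 0`, every 3-partite 3-graph with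
`n > c·γ⁻¹²` vertices in each class and minimum vertex degree at least `(5/9 + γ)·n²`
contains a perfect matching. -/
theorem asymptotic_perfect_matching :
    ∃ c : ℝ, 0 < c ∧ ∀ γ : ℝ, 0 < γ → ∀ n : ℕ, c / γ ^ 12 < n →
      ∀ H : Finset (Fin 3 → Fin n),
        (∀ (i : Fin 3) (x : Fin n), (5 / 9 + γ) * n ^ 2 ≤ (deg3 H i x : ℝ)) →
        ∃ M : Finset (Fin 3 → Fin n), M ⊆ H ∧
          (∀ e ∈ M, ∀ f ∈ M, e ≠ f → ∀ i, e i ≠ f i) ∧ M.card = n := by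
  refine ⟨10 ^ 22, by positivity, fun γ hγ n hn H h_deg ↦ ?_⟩
  obtain ⟨M, hMH, hM, card_M⟩ := exists_perfect_matching (H := H) hγ
    (by rwa [Fintype.card_fin]) (fun i x ↦ by rw [Fintype.card_fin]; exact h_deg i x)
  exact ⟨M, hMH, hM, card_M.trans (Fintype.card_fin n)⟩
end
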